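/- arXiv:2103.01369 — 3 statements merged into one kernel-verified Lean document; each statement's English description precedes it below -/
import Mathlib

section
/- Fix ε ∈ (1/2, 1] and a constant C > 0. There exist ρ ∈ (0,1), c > 0 and N ∈ ℕ such that for all n ≥ N the following holds: if X ∼ N(0, I_n), then with probability at least 1 − e^{−cn} there is no pair (σ, σ') ∈ B_n × B_n with (1/n)|⟨σ, σ'⟩| ∈ [ρ, (n−2)/n], n^{−1/2}|⟨σ, X⟩| ≤ C·2^{−nε}, and n^{−1/2}|⟨σ', X⟩| ≤ C·2^{−nε}. -/
open MeasureTheory ProbabilityTheory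

/-!
The proof is a first-moment (union) bound.

If `σ, σ'` are cube points with `|⟨σ, σ'⟩| = n - 2k`, then `σ'` agrees with one of `±σ` exactly off
a set `S` of `k` coordinates. When `⟨σ, X⟩` and `⟨σ', X⟩` are both at most `t` in absolute value, so
are the half-difference and the half-sum, i.e. the partial sums of `σ i * X i` over `S` and over its
complement. These two sums are independent, and if `S` is neither empty nor everything, each
contains a standard Gaussian summand independent of the others, hence has density at most `1/2` and
lies in `[-t, t]` with probability at most `t` (`partial_sum_small`). So each pair `(σ, S)`
contributes at most `t ^ 2` with `t = C √n 2^{-nε}` (`pair_prob_le`).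

There are `2 ^ n` choices of `σ`, and at most `(1 + x) ^ n / x ^ (δ n)` sets `S` of size at most
`δ n`, for every `x ∈ (0, 1]` (`card_small_sets`). With `η = (2 ε - 1) / 4`, `x = 2 ^ η - 1` and `δ`
so small that `x ^ δ ≥ 2 ^ (-η)`, the number of such `S` is at most `2 ^ (2 η n)`, and the union
bound gives `C² n 2 ^ (n (1 + 2 η - 2 ε)) = C² n 2 ^ (-2 η n)`, which is at most `2 ^ (-η n)` for
large `n`. The overlap threshold is `ρ = 1 - 2 δ`.
-/

/-- The standard Gaussian measure `N(0, I_n)` on `ℝ^n`. -/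
noncomputable def stdGaussian (n : ℕ) : Measure (Fin n → ℝ) :=
  Measure.pi fun _ => gaussianReal 0 1

/-- Membership in the binary cube `B_n = {-1,1}^n`. -/
def isCube {n : ℕ} (σ : Fin n → ℝ) : Prop := ∀ i, σ i = 1 ∨ σ i = -1

/-- The standard inner product on `ℝ^n`. -/
noncomputable def ip {n : ℕ} (x y : Fin n → ℝ) : ℝ := ∑ i, x i * y i

/-- The standard Gaussian density is at most `1 / √(2π) ≤ 1 / 2`. -/
lemma gaussian_Icc_le (a t : ℝ) :
    gaussianReal 0 1 (Set.Icc (a - t) (a + t)) ≤ ENNReal.ofReal t := by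
  rw [gaussianReal_apply 0 (one_ne_zero)]
  have hpdf : ∀ x, gaussianPDF 0 1 x ≤ ENNReal.ofReal (1 / 2) := by
    intro x
    rw [gaussianPDF]
    apply ENNReal.ofReal_le_ofReal
    rw [gaussianPDFReal]
    have h2 : (2 : ℝ) ≤ √(2 * Real.pi * (1 : NNReal)) := by
      apply Real.le_sqrt_of_sq_le
      have := Real.pi_gt_three
      push_cast
      linarith
    have h3 : (√(2 * Real.pi * (1 : NNReal)))⁻¹ ≤ 1 / 2 := by
      rw [← one_div]
      exact one_div_le_one_div_of_le (by norm_num) h2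
    have h4 : Real.exp (-(x - 0) ^ 2 / (2 * (1 : NNReal))) ≤ 1 := by
      rw [Real.exp_le_one_iff]
      push_cast
      nlinarith [sq_nonneg (x - 0)]
    calc _ ≤ (1 / 2 : ℝ) * 1 := by gcongr
      _ = 1 / 2 := by ring
  calc ∫⁻ x in Set.Icc (a - t) (a + t), gaussianPDF 0 1 x
      ≤ ∫⁻ _ in Set.Icc (a - t) (a + t), ENNReal.ofReal (1 / 2) := lintegral_mono fun x => hpdf x
    _ = ENNReal.ofReal t := by
      rw [setLIntegral_const, Real.volume_Icc, ← ENNReal.ofReal_mul (by norm_num)]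
      congr 1
      ring

/-- The law of the partial sum over `S` is a convolution with a standard Gaussian factor coming from
any chosen coordinate of `S`. -/
lemma partial_sum_small {n : ℕ} {σ : Fin n → ℝ} (hσ : isCube σ) {S : Finset (Fin n)}
    (hS : S.Nonempty) (t : ℝ) :
    _root_.stdGaussian n {X | |∑ i ∈ S, σ i * X i| ≤ t} ≤ ENNReal.ofReal t := by
  obtain ⟨i, hi⟩ := hS
  have : IsProbabilityMeasure (_root_.stdGaussian n) := by unfold _root_.stdGaussian; infer_instance
  have hind : iIndepFun (fun (i : Fin n) (X : Fin n → ℝ) => σ i * X i) (_root_.stdGaussian n) :=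
    iIndepFun_pi (μ := fun _ : Fin n => gaussianReal 0 1) (X := fun i x => σ i * x)
      (fun i => by fun_prop)
  have h := hind.indepFun_finsetSum_of_notMem (fun i => by fun_prop) (s := S.erase i) (i := i)
    (by simp)
  set Z : (Fin n → ℝ) → ℝ := ∑ j ∈ S.erase i, fun X => σ j * X j with hZ
  have hZm : Measurable Z := by rw [hZ]; fun_prop
  have hYm : Measurable (fun X : Fin n → ℝ => σ i * X i) := by fun_prop
  have hlaw : (_root_.stdGaussian n).map (fun X : Fin n → ℝ => σ i * X i) = gaussianReal 0 1 := by
    have h1 : (_root_.stdGaussian n).map (fun X : Fin n → ℝ => X i) = gaussianReal 0 1 :=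
      (measurePreserving_eval (fun _ : Fin n => gaussianReal 0 1) i).map_eq
    have h2 : (fun X : Fin n → ℝ => σ i * X i) = (fun x => σ i * x) ∘ (fun X => X i) := rfl
    rw [h2, ← Measure.map_map (by fun_prop) (by fun_prop), h1, gaussianReal_map_const_mul]
    have h3 : σ i ^ 2 = 1 := by rcases hσ i with h | h <;> rw [h] <;> norm_num
    congr 1
    · simp
    · ext; simp [h3]
  have hprod := (indepFun_iff_map_prod_eq_prod_map_map hZm.aemeasurable hYm.aemeasurable).1 h
  have hA : MeasurableSet {p : ℝ × ℝ | |p.1 + p.2| ≤ t} :=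
    measurableSet_le (by fun_prop) (by fun_prop)
  have hset : {X : Fin n → ℝ | |∑ i ∈ S, σ i * X i| ≤ t}
      = (fun X => (Z X, σ i * X i)) ⁻¹' {p : ℝ × ℝ | |p.1 + p.2| ≤ t} := by
    ext X
    simp [hZ, Finset.sum_apply, ← Finset.sum_erase_add _ _ hi]
  have : IsProbabilityMeasure ((_root_.stdGaussian n).map Z) :=
    Measure.isProbabilityMeasure_map hZm.aemeasurable
  rw [hset, ← Measure.map_apply (by fun_prop) hA, hprod, hlaw, Measure.prod_apply hA]
  calc _ ≤ ∫⁻ _, ENNReal.ofReal t ∂((_root_.stdGaussian n).map Z) := by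
        apply lintegral_mono
        intro z
        refine le_trans (measure_mono fun y hy => ?_) (gaussian_Icc_le (-z) t)
        have hy' : |z + y| ≤ t := hy
        rw [abs_le] at hy'
        exact ⟨by linarith, by linarith⟩
    _ = ENNReal.ofReal t := by simp

lemma pair_prob_le {n : ℕ} {σ : Fin n → ℝ} (hσ : isCube σ) {S : Finset (Fin n)}
    (hS : S.Nonempty) (hS' : Sᶜ.Nonempty) {t : ℝ} (ht : 0 ≤ t) :
    _root_.stdGaussian n {X | |∑ i ∈ S, σ i * X i| ≤ t ∧ |∑ i ∈ Sᶜ, σ i * X i| ≤ t}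
      ≤ ENNReal.ofReal (t ^ 2) := by
  have hind : iIndepFun (fun (i : Fin n) (X : Fin n → ℝ) => X i) (_root_.stdGaussian n) :=
    iIndepFun_pi (μ := fun _ : Fin n => gaussianReal 0 1) (X := fun i x => x)
      (fun i => by fun_prop)
  have h := hind.indepFun_finset S Sᶜ disjoint_compl_right (fun i => by fun_prop)
  let f : (T : Finset (Fin n)) → (T → ℝ) → ℝ := fun T x => ∑ i : T, σ i * x i
  have hf : ∀ T, Measurable (f T) := fun T => by unfold f; fun_prop
  have h2 := h.comp (hf S) (hf Sᶜ)
  have hB : MeasurableSet {y : ℝ | |y| ≤ t} := measurableSet_le (by fun_prop) (by fun_prop)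
  have h3 := h2.measure_inter_preimage_eq_mul _ _ hB hB
  have hpre : ∀ T : Finset (Fin n),
      ((f T) ∘ fun (X : Fin n → ℝ) (i : T) => X i) ⁻¹' {y : ℝ | |y| ≤ t}
        = {X | |∑ i ∈ T, σ i * X i| ≤ t} := by
    intro T
    ext X
    simp only [f, Set.mem_preimage, Function.comp, Set.mem_ofPred_eq]
    rw [Finset.sum_coe_sort T (fun i => σ i * X i)]
  rw [hpre, hpre] at h3
  rw [Set.ofPred_and, h3, sq, ENNReal.ofReal_mul ht]
  exact mul_le_mul' (partial_sum_small hσ hS t) (partial_sum_small hσ hS' t)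

/-- Chernoff bound for the binomial tail: weight each set by `x ^ #S ≥ x ^ m`. -/
lemma card_small_sets (n : ℕ) {x m : ℝ} (hx : 0 < x) (hx1 : x ≤ 1) :
    (((Finset.univ : Finset (Finset (Fin n))).filter fun S => (S.card : ℝ) ≤ m).card : ℝ) * x ^ m
      ≤ (1 + x) ^ n := by
  have h : ∑ S : Finset (Fin n), x ^ S.card = (1 + x) ^ n := by
    have := Finset.prod_one_add (f := fun _ : Fin n => x) Finset.univ
    simpa using this.symm
  rw [← h, ← nsmul_eq_mul, ← Finset.sum_const]
  refine le_trans (Finset.sum_le_sum fun S hS => ?_)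
    (Finset.sum_le_sum_of_subset_of_nonneg (Finset.filter_subset _ _) fun S _ _ => by positivity)
  rw [← Real.rpow_natCast]
  exact Real.rpow_le_rpow_of_exponent_ge hx hx1 (Finset.mem_filter.1 hS).2

/-- Two cube points split the coordinates into a set `S` of size `(n - |⟨σ, σ'⟩|) / 2` and its
complement, on which `σ'` is `-τ σ` and `τ σ` respectively for one sign `τ`; small discrepancy of
both points makes both partial sums small. -/
lemma exists_split {n : ℕ} {σ σ' X : Fin n → ℝ} (hσ : isCube σ) (hσ' : isCube σ') {t : ℝ}
    (h : |ip σ X| ≤ t) (h' : |ip σ' X| ≤ t) :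
    ∃ S : Finset (Fin n), |ip σ σ'| = n - 2 * S.card ∧
      |∑ i ∈ S, σ i * X i| ≤ t ∧ |∑ i ∈ Sᶜ, σ i * X i| ≤ t := by
  classical
  set D : Finset (Fin n) := Finset.univ.filter fun i => σ' i ≠ σ i with hD
  have hin : ∀ i ∈ D, σ' i = - σ i := by
    intro i hi
    have := (Finset.mem_filter.1 hi).2
    rcases hσ i with a | a <;> rcases hσ' i with b | b <;> simp_all
  have hout : ∀ i ∈ Dᶜ, σ' i = σ i := by
    intro i hi
    simpa [hD] using hi
  have hsq : ∀ i, σ i * σ i = 1 := by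
    intro i
    rcases hσ i with a | a <;> rw [a] <;> norm_num
  have hcard : (Dᶜ.card : ℝ) = n - D.card := by
    rw [Finset.card_compl, Nat.cast_sub (Finset.card_le_univ D)]
    simp
  have hip : ip σ σ' = n - 2 * D.card := by
    rw [ip, ← Finset.sum_add_sum_compl D]
    rw [Finset.sum_congr rfl (g := fun _ => (-1 : ℝ)) fun i hi => by rw [hin i hi]; linarith [hsq i],
      Finset.sum_congr (s₁ := Dᶜ) rfl (g := fun _ => (1 : ℝ)) fun i hi => by
        rw [hout i hi]; exact hsq i]
    simp only [Finset.sum_const, nsmul_eq_mul, hcard]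
    ring
  have e1 : ip σ X = ∑ i ∈ D, σ i * X i + ∑ i ∈ Dᶜ, σ i * X i :=
    (Finset.sum_add_sum_compl D _).symm
  have e2 : ip σ' X = - ∑ i ∈ D, σ i * X i + ∑ i ∈ Dᶜ, σ i * X i := by
    rw [ip, ← Finset.sum_add_sum_compl D, ← Finset.sum_neg_distrib]
    congr 1
    · exact Finset.sum_congr rfl fun i hi => by rw [hin i hi]; ring
    · exact Finset.sum_congr rfl fun i hi => by rw [hout i hi]
  rw [e1, abs_le] at h
  rw [e2, abs_le] at h'
  have a1 : |∑ i ∈ D, σ i * X i| ≤ t := by rw [abs_le]; constructor <;> linarith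
  have a2 : |∑ i ∈ Dᶜ, σ i * X i| ≤ t := by rw [abs_le]; constructor <;> linarith
  rcases le_total 0 (ip σ σ') with hs | hs
  · exact ⟨D, by rw [abs_of_nonneg hs, hip], a1, a2⟩
  · refine ⟨Dᶜ, ?_, a2, by rwa [compl_compl]⟩
    rw [abs_of_nonpos hs, hip, hcard]
    ring

/-- The union bound over all `σ` and all nonempty proper `S` with `#S ≤ δ n`. -/
lemma union_bound {n : ℕ} (hn : 0 < n) {δ t : ℝ} (hδ : δ < 1) (ht : 0 ≤ t) :
    _root_.stdGaussian n {X : Fin n → ℝ | ∃ σ σ' : Fin n → ℝ, isCube σ ∧ isCube σ' ∧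
        1 - 2 * δ ≤ |ip σ σ'| / n ∧ |ip σ σ'| / n ≤ ((n : ℝ) - 2) / n ∧
        |ip σ X| ≤ t ∧ |ip σ' X| ≤ t} ≤
      ENNReal.ofReal (2 ^ n *
        ((Finset.univ : Finset (Finset (Fin n))).filter fun S => (S.card : ℝ) ≤ δ * n).card
          * t ^ 2) := by
  classical
  have hn' : (0 : ℝ) < n := by exact_mod_cast hn
  set A : Finset (Fin n → ℝ) := Fintype.piFinset fun _ => ({1, -1} : Finset ℝ) with hA
  have hAm : ∀ σ, σ ∈ A ↔ isCube σ := by intro σ; simp [hA, isCube]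
  have hAc : A.card = 2 ^ n := by
    have : ((1 : ℝ) ≠ -1) := by norm_num
    simp [hA, Fintype.card_piFinset, Finset.card_pair this]
  set F := (Finset.univ : Finset (Finset (Fin n))).filter fun S => (S.card : ℝ) ≤ δ * n with hF
  set G := F.filter fun S => S.Nonempty with hG
  let E : (Fin n → ℝ) × Finset (Fin n) → Set (Fin n → ℝ) := fun p =>
    {X | |∑ i ∈ p.2, p.1 i * X i| ≤ t ∧ |∑ i ∈ p.2ᶜ, p.1 i * X i| ≤ t}
  have hE : ∀ p ∈ A ×ˢ G, _root_.stdGaussian n (E p) ≤ ENNReal.ofReal (t ^ 2) := by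
    rintro ⟨σ, S⟩ hp
    obtain ⟨h1, h2⟩ := Finset.mem_product.1 hp
    obtain ⟨h3, h4⟩ := Finset.mem_filter.1 h2
    have h5 : (S.card : ℝ) ≤ δ * n := (Finset.mem_filter.1 h3).2
    refine pair_prob_le ((hAm σ).1 h1) h4 ?_ ht
    rw [Finset.nonempty_iff_ne_empty, Ne, Finset.compl_eq_empty_iff]
    rintro rfl
    simp only [Finset.card_univ, Fintype.card_fin] at h5
    nlinarith
  have hsub : {X : Fin n → ℝ | ∃ σ σ' : Fin n → ℝ, isCube σ ∧ isCube σ' ∧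
        1 - 2 * δ ≤ |ip σ σ'| / n ∧ |ip σ σ'| / n ≤ ((n : ℝ) - 2) / n ∧
        |ip σ X| ≤ t ∧ |ip σ' X| ≤ t} ⊆ ⋃ p ∈ A ×ˢ G, E p := by
    rintro X ⟨σ, σ', h1, h2, h3, h4, h5, h6⟩
    obtain ⟨S, hS, hS1, hS2⟩ := exists_split h1 h2 h5 h6
    rw [hS, le_div_iff₀ hn'] at h3
    rw [hS, div_le_div_iff_of_pos_right hn'] at h4
    refine Set.mem_biUnion (x := (σ, S)) ?_ ⟨hS1, hS2⟩
    refine Finset.mem_coe.2 (Finset.mem_product.2 ⟨(hAm σ).2 h1, ?_⟩)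
    refine Finset.mem_filter.2 ⟨Finset.mem_filter.2 ⟨Finset.mem_univ _, ?_⟩, ?_⟩
    · show (S.card : ℝ) ≤ δ * n
      linarith
    · rw [← Finset.card_pos]
      have : (0 : ℝ) < S.card := by linarith
      exact_mod_cast this
  calc _ ≤ ∑ p ∈ A ×ˢ G, _root_.stdGaussian n (E p) :=
        (measure_mono hsub).trans (measure_biUnion_finset_le _ _)
    _ ≤ ∑ _p ∈ A ×ˢ G, ENNReal.ofReal (t ^ 2) := Finset.sum_le_sum hE
    _ = ENNReal.ofReal (((A ×ˢ G).card : ℝ) * t ^ 2) := by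
        rw [Finset.sum_const, nsmul_eq_mul, ENNReal.ofReal_mul (by positivity),
          ENNReal.ofReal_natCast]
    _ ≤ _ := by
        apply ENNReal.ofReal_le_ofReal
        rw [Finset.card_product, hAc]
        push_cast
        have : (G.card : ℝ) ≤ F.card := by exact_mod_cast Finset.card_filter_le _ _
        gcongr

/-- Pairwise (2-)Overlap Gap Property for the NPP at energy levels `C · 2^{-nε}`,
`ε ∈ (1/2, 1]`. -/
theorem two_ogp (ε : ℝ) (hε : 1 / 2 < ε) (hε1 : ε ≤ 1) (C : ℝ) (hC : 0 < C) :
    ∃ ρ : ℝ, 0 < ρ ∧ ρ < 1 ∧ ∃ c : ℝ, 0 < c ∧ ∃ N : ℕ, ∀ n : ℕ, N ≤ n →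
      stdGaussian n {X : Fin n → ℝ | ∃ σ σ' : Fin n → ℝ, isCube σ ∧ isCube σ' ∧
          ρ ≤ |ip σ σ'| / n ∧ |ip σ σ'| / n ≤ ((n : ℝ) - 2) / n ∧
          |ip σ X| / Real.sqrt n ≤ C * (2 : ℝ) ^ (-(n : ℝ) * ε) ∧
          |ip σ' X| / Real.sqrt n ≤ C * (2 : ℝ) ^ (-(n : ℝ) * ε)} ≤
        ENNReal.ofReal (Real.exp (-c * n)) := by
  have hl2 : 0 < Real.log 2 := Real.log_pos (by norm_num)
  -- `a = η log 2` with `η = (2 ε - 1) / 4`, so that `exp (a n) = 2 ^ (η n)`.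
  obtain ⟨a, ha⟩ : ∃ a, a = (2 * ε - 1) / 4 * Real.log 2 := ⟨_, rfl⟩
  have ha0 : 0 < a := by rw [ha]; apply mul_pos _ hl2; linarith
  have ha1 : a < Real.log 2 := by rw [ha]; nlinarith
  obtain ⟨x, hx⟩ : ∃ x, x = Real.exp a - 1 := ⟨_, rfl⟩
  have hx0 : 0 < x := by have := Real.add_one_lt_exp ha0.ne'; linarith
  have hx1 : x < 1 := by
    have := Real.exp_lt_exp.2 ha1
    rw [Real.exp_log (by norm_num)] at this
    linarith
  have hlx : Real.log x < 0 := Real.log_neg hx0 hx1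
  obtain ⟨δ, hδ⟩ : ∃ δ, δ = min (1 / 4) (a / (-Real.log x)) := ⟨_, rfl⟩
  have hδ0 : 0 < δ := by
    rw [hδ]; exact lt_min (by norm_num) (div_pos ha0 (by linarith))
  have hδ4 : δ ≤ 1 / 4 := by rw [hδ]; exact min_le_left _ _
  have hδx : -a ≤ Real.log x * δ := by
    have : δ ≤ a / (-Real.log x) := by rw [hδ]; exact min_le_right _ _
    rw [le_div_iff₀ (by linarith)] at this
    linarith
  refine ⟨1 - 2 * δ, by linarith, by linarith, a, ha0, ⌈2 * C ^ 2 / a ^ 2⌉₊ + 1, fun n hn => ?_⟩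
  have hn0 : 0 < n := by omega
  have hn' : (0 : ℝ) < n := by exact_mod_cast hn0
  have hnC : 2 * C ^ 2 / a ^ 2 ≤ n :=
    (Nat.le_ceil _).trans (by exact_mod_cast (Nat.le_succ _).trans hn)
  have hs : 0 < √(n : ℝ) := Real.sqrt_pos.2 hn'
  have ht : 0 ≤ C * (2 : ℝ) ^ (-(n : ℝ) * ε) * √n := by positivity
  simp only [div_le_iff₀ hs]
  refine (union_bound hn0 (δ := δ) (by linarith) ht).trans (ENNReal.ofReal_le_ofReal ?_)
  have hcard := card_small_sets n (m := δ * n) hx0 hx1.le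
  set K : ℝ := (((Finset.univ : Finset (Finset (Fin n))).filter
    fun S => (S.card : ℝ) ≤ δ * n).card : ℝ) with hK
  have hK0 : 0 ≤ K := by rw [hK]; positivity
  have hKle : K ≤ Real.exp (2 * a * n) := by
    have h1 : Real.exp (-a * n) ≤ x ^ (δ * n) := by
      rw [Real.rpow_def_of_pos hx0]
      apply Real.exp_le_exp.2
      nlinarith
    have h2 : (1 + x) ^ n = Real.exp (a * n) := by
      rw [hx, mul_comm a, Real.exp_nat_mul]; ring
    rw [h2] at hcard
    have h3 := (mul_le_mul_of_nonneg_left h1 hK0).trans hcard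
    calc K = K * Real.exp (-a * n) * Real.exp (a * n) := by
          rw [mul_assoc, ← Real.exp_add]; ring_nf; simp
      _ ≤ Real.exp (a * n) * Real.exp (a * n) := by gcongr
      _ = _ := by rw [← Real.exp_add]; ring_nf
  have h2n : (2 : ℝ) ^ n = Real.exp (n * Real.log 2) := by
    rw [Real.exp_nat_mul, Real.exp_log (by norm_num)]
  have hCn : C ^ 2 * n ≤ Real.exp (a * n) := by
    have h1 := Real.quadratic_le_exp_of_nonneg (x := a * n) (by positivity)
    rw [div_le_iff₀ (by positivity)] at hnC
    have h2 : 0 ≤ a * n := by positivity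
    nlinarith
  have ht2 : (C * (2 : ℝ) ^ (-(n : ℝ) * ε) * √n) ^ 2
      = C ^ 2 * n * Real.exp (-2 * n * ε * Real.log 2) := by
    rw [mul_pow, mul_pow, Real.sq_sqrt hn'.le, Real.rpow_def_of_pos (by norm_num), sq (Real.exp _),
      ← Real.exp_add]
    ring_nf
  rw [ht2, h2n]
  calc Real.exp (n * Real.log 2) * K * (C ^ 2 * n * Real.exp (-2 * n * ε * Real.log 2))
      ≤ Real.exp (n * Real.log 2) * Real.exp (2 * a * n) *
          (Real.exp (a * n) * Real.exp (-2 * n * ε * Real.log 2)) := by gcongr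
    _ = Real.exp (-a * n) := by
        rw [← Real.exp_add, ← Real.exp_add, ← Real.exp_add]
        congr 1
        rw [ha]
        ring
end

section
/- For every ε > 0 and every constant C > 0 there exist m ∈ ℕ and reals β, η with 0 < η < β < 1 such that the following holds. For every sequence of finite sets I_n ⊂ [0,1] with log₂|I_n| = o(n), there exist c > 0 and N such that for all n ≥ N: if X_0, X_1, …, X_m are i.i.d. N(0, I_n) vectors, then with probability at least 1 − 2^{−cn} there is no m-tuple (σ^(1), …, σ^(m)) of points of B_n satisfying both (a) β − η ≤ (1/n)|⟨σ^(i), σ^(j)⟩| ≤ β for all 1 ≤ i < j ≤ m, and (b) there exist τ_1, …, τ_m ∈ I_n with n^{−1/2}|⟨σ^(i), √(1−τ_i²)·X_0 + τ_i·X_i⟩| ≤ C·2^{−nε} for all 1 ≤ i ≤ m. -/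
/-!
The proof is a first-moment bound over all tuples `σ` of cube points and all choices of `τ`.

*Counting.* If the overlaps with the first point are all at least `1 - κ` in absolute value, a
Chernoff bound leaves at most `2 · 2^{nε/4}` choices for each point, once `κ` is small depending on
`ε` (`exists_params`, `card_near_le`, `card_tuples_le`). With the choice of the first point and
`|I_n| ≤ 2^{nε/4}` choices for each `τ_i`, there are at most `2^n (2 · 2^{nε/2})^m` pairs `(σ, τ)`.

*Probability.* For fixed `(σ, τ)` the forms `Y_i = n^{-1/2} ⟨σ_i, √(1-τ_i²) X_0 + τ_i X_i⟩` are
jointly Gaussian. After flipping signs, the Gram matrix of the `σ_i / √n` is within `η` entrywise of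
`(1 - β) I + β 11ᵀ`, so the covariance of `Y` is at least `l = 1 - β - m η` times the identity,
whatever the `τ_i` are (`coeff_lower`). Hence `P(|Y_i| ≤ δ for all i) ≤ (√e δ / √l)^m`
(`smallBall`), which follows from Markov's inequality applied to `exp(-|Y|² / (2δ²))`, whose mean is
computed by writing it as a Gaussian characteristic function.

With `β = 1 - κ/2`, `η = κ/(4m)` one has `l = κ/4`, and with `δ = C 2^{-nε}` the total is at most
`2^n (K 2^{nε/2} 2^{-nε})^m` for a constant `K`, thus at most `2^{n(1 - mε/4)}` for large `n`;
`m ≥ 8/ε` gives `2^{-n}`.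
-/

open MeasureTheory ProbabilityTheory Filter

/-! ### Gaussian integrals and the small-ball estimate -/

lemma integral_exp_neg_mul_sq_gaussianReal {b : ℝ} (hb : 0 < b) :
    ∫ x, Real.exp (-b * x ^ 2) ∂(gaussianReal 0 1) = 1 / Real.sqrt (1 + 2 * b) := by
  rw [integral_gaussianReal_eq_integral_smul (by norm_num)]
  have h : ∀ x : ℝ, gaussianPDFReal 0 1 x • Real.exp (-b * x ^ 2)
      = (Real.sqrt (2 * Real.pi))⁻¹ * Real.exp (-(b + 1 / 2) * x ^ 2) := by
    intro x
    simp only [gaussianPDFReal, smul_eq_mul, NNReal.coe_one, mul_one, sub_zero]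
    rw [mul_assoc, ← Real.exp_add]
    congr 2
    ring
  simp_rw [h]
  rw [integral_const_mul, integral_gaussian, ← Real.sqrt_inv, ← Real.sqrt_mul (by positivity),
    ← Real.sqrt_one, ← Real.sqrt_div (by norm_num), Real.sqrt_one]
  congr 1
  have := Real.pi_ne_zero
  field_simp
  ring

lemma integral_cexp_gaussianReal (t : ℝ) :
    ∫ x, Complex.exp (t * x * Complex.I) ∂(gaussianReal 0 1) = Complex.exp (-(t ^ 2 / 2 : ℝ)) := by
  have h := charFun_gaussianReal (μ := 0) (v := 1) t
  rw [charFun_apply_real] at h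
  rw [h]
  congr 1
  push_cast
  ring

lemma integral_cexp_pi {κ : Type*} [Fintype κ] (t : κ → ℝ) :
    ∫ x : κ → ℝ, Complex.exp ((∑ k, t k * x k : ℝ) * Complex.I)
      ∂(Measure.pi fun _ => gaussianReal 0 1) = Complex.exp (-((∑ k, t k ^ 2) / 2 : ℝ)) := by
  have h : ∀ x : κ → ℝ, Complex.exp ((∑ k, t k * x k : ℝ) * Complex.I)
      = ∏ k, Complex.exp (t k * x k * Complex.I) := by
    intro x
    rw [← Complex.exp_sum, ← Finset.sum_mul]
    push_cast
    rfl
  simp_rw [h]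
  rw [integral_fintype_prod_eq_prod (fun k (y : ℝ) => Complex.exp (t k * y * Complex.I))]
  simp_rw [integral_cexp_gaussianReal]
  rw [← Complex.exp_sum]
  congr 1
  push_cast
  rw [Finset.sum_neg_distrib, Finset.sum_div]

lemma integral_cexp_pi_pi {α κ : Type*} [Fintype α] [Fintype κ] (t : α → κ → ℝ) :
    ∫ x : α → κ → ℝ, Complex.exp ((∑ a, ∑ k, t a k * x a k : ℝ) * Complex.I)
      ∂(Measure.pi fun _ => Measure.pi fun _ => gaussianReal 0 1)
      = Complex.exp (-((∑ a, ∑ k, t a k ^ 2) / 2 : ℝ)) := by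
  have h : ∀ x : α → κ → ℝ, Complex.exp ((∑ a, ∑ k, t a k * x a k : ℝ) * Complex.I)
      = ∏ a, Complex.exp ((∑ k, t a k * x a k : ℝ) * Complex.I) := by
    intro x
    rw [← Complex.exp_sum, ← Finset.sum_mul]
    push_cast
    rfl
  simp_rw [h]
  rw [integral_fintype_prod_eq_prod
    (fun a (y : κ → ℝ) => Complex.exp ((∑ k, t a k * y k : ℝ) * Complex.I))]
  simp_rw [integral_cexp_pi]
  rw [← Complex.exp_sum]
  congr 1
  push_cast
  rw [Finset.sum_neg_distrib, Finset.sum_div]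

/-- If the Gram form of the coefficient vectors `V i` is at least `l` times the identity, the
Gaussian linear forms `Y i = ⟨V i, x⟩` satisfy `E exp(-∑ Y i ^ 2 / (2 δ ^ 2)) ≤ (δ / √l) ^ #ι`.
The integrand is written as the characteristic function at `Y / δ` of an auxiliary standard Gaussian
vector `g`; after swapping the integrals, the inner one is the characteristic function of `x`,
which is bounded using the hypothesis on the Gram form. -/
lemma integral_exp_neg_sq_le {α κ ι : Type*} [Fintype α] [Fintype κ] [Fintype ι]
    (V : ι → α → κ → ℝ) {l δ : ℝ} (hl : 0 < l) (hδ : 0 < δ)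
    (hV : ∀ g : ι → ℝ, l * ∑ i, g i ^ 2 ≤ ∑ a, ∑ k, (∑ i, g i * V i a k) ^ 2) :
    ∫ x : α → κ → ℝ, Real.exp (-((∑ i, ((∑ a, ∑ k, V i a k * x a k) / δ) ^ 2) / 2))
      ∂(Measure.pi fun _ => Measure.pi fun _ => gaussianReal 0 1)
      ≤ (δ / Real.sqrt l) ^ Fintype.card ι := by
  set μ : Measure (α → κ → ℝ) := Measure.pi fun _ => Measure.pi fun _ => gaussianReal 0 1 with hμ
  set γ : Measure (ι → ℝ) := Measure.pi fun _ => gaussianReal 0 1 with hγ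
  let F : (α → κ → ℝ) → (ι → ℝ) → ℂ := fun x g =>
    Complex.exp ((∑ i, ((∑ a, ∑ k, V i a k * x a k) / δ) * g i : ℝ) * Complex.I)
  have h1 : ∀ x : α → κ → ℝ,
      ((Real.exp (-((∑ i, ((∑ a, ∑ k, V i a k * x a k) / δ) ^ 2) / 2)) : ℝ) : ℂ)
        = ∫ g, F x g ∂γ := by
    intro x
    rw [hγ, integral_cexp_pi]
    push_cast
    rfl
  have h2 : ∀ g : ι → ℝ, ∫ x, F x g ∂μ
      = ((Real.exp (-((∑ a, ∑ k, ((∑ i, g i * V i a k) / δ) ^ 2) / 2)) : ℝ) : ℂ) := by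
    intro g
    have : ∀ x, F x g = Complex.exp
        ((∑ a, ∑ k, ((∑ i, g i * V i a k) / δ) * x a k : ℝ) * Complex.I) := by
      intro x
      simp only [F]
      congr 3
      simp_rw [Finset.sum_div, Finset.sum_mul]
      rw [Finset.sum_comm]
      refine Finset.sum_congr rfl fun a _ => ?_
      rw [Finset.sum_comm]
      refine Finset.sum_congr rfl fun k _ => Finset.sum_congr rfl fun i _ => ?_
      ring
    simp_rw [this]
    rw [hμ, integral_cexp_pi_pi]
    push_cast
    rfl
  have hint : Integrable (Function.uncurry F) (μ.prod γ) := by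
    refine Integrable.of_bound (C := 1) ?_ ?_
    · refine Continuous.aestronglyMeasurable ?_
      simp only [F, Function.uncurry_def]
      fun_prop
    · refine Filter.Eventually.of_forall fun p => ?_
      simp only [F, Function.uncurry]
      rw [Complex.norm_exp_ofReal_mul_I]
  have h3 : ∫ x : α → κ → ℝ, Real.exp (-((∑ i, ((∑ a, ∑ k, V i a k * x a k) / δ) ^ 2) / 2)) ∂μ
      = ∫ g : ι → ℝ, Real.exp (-((∑ a, ∑ k, ((∑ i, g i * V i a k) / δ) ^ 2) / 2)) ∂γ := by
    have := integral_integral_swap hint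
    simp_rw [← h1, h2] at this
    rw [integral_complex_ofReal, integral_complex_ofReal] at this
    exact_mod_cast this
  rw [h3]
  have hb : 0 < l / δ ^ 2 / 2 := by positivity
  have hcont : ∀ f : (ι → ℝ) → ℝ, Continuous f → (∀ g, 0 ≤ f g) →
      Integrable (fun g => Real.exp (-f g)) γ := by
    intro f hf h0
    refine Integrable.of_bound (C := 1) (by fun_prop) ?_
    refine Filter.Eventually.of_forall fun g => ?_
    rw [Real.norm_eq_abs, Real.abs_exp, Real.exp_le_one_iff]
    linarith [h0 g]
  calc _ ≤ ∫ g : ι → ℝ, ∏ i, Real.exp (-(l / δ ^ 2 / 2) * g i ^ 2) ∂γ := by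
        have he : ∀ g : ι → ℝ, ∏ i, Real.exp (-(l / δ ^ 2 / 2) * g i ^ 2)
            = Real.exp (-((l / δ ^ 2 / 2) * ∑ i, g i ^ 2)) := by
          intro g
          rw [← Real.exp_sum, ← Finset.mul_sum, neg_mul]
        simp_rw [he]
        refine integral_mono (hcont _ (by fun_prop) fun g => by positivity)
          (hcont _ (by fun_prop) fun g => by positivity) fun g => ?_
        simp only [Real.exp_le_exp, neg_le_neg_iff]
        have := hV g
        simp_rw [div_pow, ← Finset.sum_div]
        calc _ = (l * ∑ i, g i ^ 2) / δ ^ 2 / 2 := by ring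
          _ ≤ _ := by gcongr
    _ = (1 / Real.sqrt (1 + 2 * (l / δ ^ 2 / 2))) ^ Fintype.card ι := by
        rw [hγ, integral_fintype_prod_eq_prod
          (fun _ (y : ℝ) => Real.exp (-(l / δ ^ 2 / 2) * y ^ 2))]
        simp_rw [integral_exp_neg_mul_sq_gaussianReal hb]
        simp
    _ ≤ _ := by
        refine pow_le_pow_left₀ (by positivity) ?_ _
        have : Real.sqrt l / δ ≤ Real.sqrt (1 + 2 * (l / δ ^ 2 / 2)) := by
          refine Real.le_sqrt_of_sq_le ?_
          rw [div_pow, Real.sq_sqrt hl.le]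
          linarith
        have hs : 0 < Real.sqrt l := Real.sqrt_pos.2 hl
        calc _ ≤ 1 / (Real.sqrt l / δ) := one_div_le_one_div_of_le (by positivity) this
          _ = _ := by rw [one_div_div]

/-- Small-ball estimate: with `Y i = ⟨V i, x⟩`, the event `|Y i| ≤ δ` for all `i` is contained in
`exp(-∑ Y i ^ 2 / (2 δ ^ 2)) ≥ exp(-#ι / 2)`, so Markov's inequality applies. -/
lemma smallBall {α κ ι : Type*} [Fintype α] [Fintype κ] [Fintype ι]
    (V : ι → α → κ → ℝ) {l δ : ℝ} (hl : 0 < l) (hδ : 0 < δ)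
    (hV : ∀ g : ι → ℝ, l * ∑ i, g i ^ 2 ≤ ∑ a, ∑ k, (∑ i, g i * V i a k) ^ 2) :
    (Measure.pi fun _ : α => Measure.pi fun _ : κ => gaussianReal 0 1)
      {x | ∀ i, |∑ a, ∑ k, V i a k * x a k| ≤ δ}
      ≤ ENNReal.ofReal ((Real.exp (1 / 2) * (δ / Real.sqrt l)) ^ Fintype.card ι) := by
  set μ : Measure (α → κ → ℝ) := Measure.pi fun _ => Measure.pi fun _ => gaussianReal 0 1 with hμ
  let f : (α → κ → ℝ) → ℝ := fun x =>
    Real.exp (-((∑ i, ((∑ a, ∑ k, V i a k * x a k) / δ) ^ 2) / 2))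
  have hf : Continuous f := by simp only [f]; fun_prop
  have hint : Integrable f μ := by
    refine Integrable.of_bound (C := 1) hf.aestronglyMeasurable ?_
    refine Filter.Eventually.of_forall fun g => ?_
    rw [Real.norm_eq_abs, Real.abs_exp, Real.exp_le_one_iff, neg_nonpos]
    positivity
  have hsub : {x : α → κ → ℝ | ∀ i, |∑ a, ∑ k, V i a k * x a k| ≤ δ}
      ⊆ {x | Real.exp (-(Fintype.card ι / 2 : ℝ)) ≤ f x} := by
    intro x hx
    simp only [Set.mem_ofPred_eq, f, Real.exp_le_exp, neg_le_neg_iff] at hx ⊢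
    have : ∑ i, ((∑ a, ∑ k, V i a k * x a k) / δ) ^ 2 ≤ ∑ _i : ι, (1 : ℝ) := by
      refine Finset.sum_le_sum fun i _ => ?_
      rw [sq_le_one_iff_abs_le_one, abs_div, abs_of_pos hδ, div_le_one hδ]
      exact hx i
    simp only [Finset.sum_const, Finset.card_univ, nsmul_eq_mul, mul_one] at this
    linarith
  have hmark := mul_meas_ge_le_integral_of_nonneg (μ := μ) (f := f)
    (Filter.Eventually.of_forall fun x => (Real.exp_pos _).le) hint
    (Real.exp (-(Fintype.card ι / 2 : ℝ)))
  have hE := integral_exp_neg_sq_le V hl hδ hV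
  refine (measure_mono hsub).trans ?_
  rw [← ofReal_measureReal]
  refine ENNReal.ofReal_le_ofReal ?_
  have h5 : Real.exp (-(Fintype.card ι / 2 : ℝ)) *
      μ.real {x | Real.exp (-(Fintype.card ι / 2 : ℝ)) ≤ f x}
      ≤ (δ / Real.sqrt l) ^ Fintype.card ι := hmark.trans hE
  rw [mul_pow, ← Real.exp_nat_mul]
  have h6 : Real.exp (-(Fintype.card ι / 2 : ℝ)) = (Real.exp (Fintype.card ι * (1 / 2) : ℝ))⁻¹ := by
    rw [← Real.exp_neg]; congr 1; ring
  rw [h6, inv_mul_le_iff₀ (Real.exp_pos _)] at h5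
  rw [h6]
  exact h5

/-! ### Lower bound for the covariance form -/

/-- A matrix that, up to conjugation by a diagonal sign matrix, is entrywise within `η` of
`(1 - β) I + β 11ᵀ` off the diagonal, and has unit diagonal, is bounded below by
`1 - β - #ι η`. -/
lemma gram_lower {ι : Type*} [Fintype ι] (a s : ι → ℝ) (R : ι → ι → ℝ) {β η : ℝ}
    (hβ : 0 ≤ β) (hη : 0 ≤ η) (hs : ∀ i, s i = 1 ∨ s i = -1) (hd : ∀ i, R i i = 1)
    (h : ∀ i j, i ≠ j → β - η ≤ s i * s j * R i j ∧ s i * s j * R i j ≤ β) :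
    (1 - β - Fintype.card ι * η) * ∑ i, a i ^ 2 ≤ ∑ i, ∑ j, a i * a j * R i j := by
  classical
  have hs2 : ∀ i, s i ^ 2 = 1 := fun i => by rcases hs i with h | h <;> rw [h] <;> norm_num
  have key : ∀ i j, β * (s i * a i * (s j * a j)) + (if i = j then (1 - β) * a i ^ 2 else 0)
      - η / 2 * (a i ^ 2 + a j ^ 2) ≤ a i * a j * R i j := by
    intro i j
    by_cases hij : i = j
    · subst hij
      rw [hd, if_pos rfl]
      have e : s i * a i * (s i * a i) = a i ^ 2 := by
        calc _ = s i ^ 2 * a i ^ 2 := by ring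
          _ = _ := by rw [hs2, one_mul]
      rw [e]
      nlinarith [mul_nonneg hη (sq_nonneg (a i))]
    · rw [if_neg hij]
      obtain ⟨h1, h2⟩ := h i j hij
      have e : a i * a j * R i j = (s i * a i * (s j * a j)) * (s i * s j * R i j) := by
        calc _ = (s i ^ 2) * (s j ^ 2) * (a i * a j * R i j) := by rw [hs2, hs2]; ring
          _ = _ := by ring
      have hb : (s i * a i) ^ 2 = a i ^ 2 := by rw [mul_pow, hs2, one_mul]
      have hb' : (s j * a j) ^ 2 = a j ^ 2 := by rw [mul_pow, hs2, one_mul]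
      rw [e, ← hb, ← hb']
      set p := s i * a i
      set q := s j * a j
      set r := s i * s j * R i j
      nlinarith [mul_nonneg (sub_nonneg.2 h2) (sq_nonneg (p - q)),
        mul_nonneg (sub_nonneg.2 h2) (sq_nonneg (p + q)),
        mul_nonneg (sub_nonneg.2 h1) (sq_nonneg (p - q)),
        mul_nonneg (sub_nonneg.2 h1) (sq_nonneg (p + q))]
  have hsum := Finset.sum_le_sum fun i (_ : i ∈ Finset.univ) =>
    Finset.sum_le_sum fun j (_ : j ∈ Finset.univ) => key i j
  refine le_trans ?_ hsum
  have : ∑ i, ∑ j, (β * (s i * a i * (s j * a j)) + (if i = j then (1 - β) * a i ^ 2 else 0)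
      - η / 2 * (a i ^ 2 + a j ^ 2)) = β * (∑ i, s i * a i) ^ 2 + (1 - β) * ∑ i, a i ^ 2
        - Fintype.card ι * η * ∑ i, a i ^ 2 := by
    simp only [Finset.sum_sub_distrib, Finset.sum_add_distrib, Finset.sum_ite_eq,
      Finset.mem_univ, if_true, ← Finset.mul_sum, Finset.sum_const, Finset.card_univ,
      nsmul_eq_mul, ← Finset.sum_mul]
    ring
  rw [this]
  nlinarith [mul_nonneg hβ (sq_nonneg (∑ i, s i * a i))]

lemma ip_comm {n : ℕ} (x y : Fin n → ℝ) : ip x y = ip y x := by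
  simp [ip, mul_comm]

lemma ip_self_cube {n : ℕ} {x : Fin n → ℝ} (hx : isCube x) : ip x x = n := by
  have : ∀ k, x k * x k = 1 := fun k => by rcases hx k with h | h <;> rw [h] <;> norm_num
  simp [ip, this]

/-- The Hamming triangle inequality between `s x`, `t y` and `z`, in terms of inner products. -/
lemma ip_triangle {n : ℕ} {x y z : Fin n → ℝ} (hx : isCube x) (hy : isCube y) (hz : isCube z)
    {s t : ℝ} (hs : s = 1 ∨ s = -1) (ht : t = 1 ∨ t = -1) :
    s * ip z x + t * ip z y - n ≤ s * t * ip x y := by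
  have : (n : ℝ) = ∑ _k : Fin n, (1 : ℝ) := by simp
  rw [this]
  simp only [ip, Finset.mul_sum]
  rw [← Finset.sum_add_distrib, ← Finset.sum_sub_distrib]
  refine Finset.sum_le_sum fun k _ => ?_
  rcases hx k with h1 | h1 <;> rcases hy k with h2 | h2 <;> rcases hz k with h3 | h3 <;>
    rcases hs with h4 | h4 <;> rcases ht with h5 | h5 <;> rw [h1, h2, h3, h4, h5] <;> norm_num

/-- Lower bound for the Gram matrix of cube points whose absolute overlaps lie in `[β - η, β]`.
Replacing each `σ i` by `± σ i` so that its overlap with the first point is nonnegative makes all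
overlaps positive, since `β - η > 1 / 2`; then `gram_lower` applies. -/
lemma overlap_gram_lower {m n : ℕ} (hm : 0 < m) (hn : 0 < n) (σ : Fin m → Fin n → ℝ)
    {β η : ℝ} (hη : 0 ≤ η) (hβη : 1 / 2 < β - η) (hσ : ∀ i, isCube (σ i))
    (h : ∀ i j : Fin m, i < j → β - η ≤ |ip (σ i) (σ j)| / n ∧ |ip (σ i) (σ j)| / n ≤ β)
    (a : Fin m → ℝ) :
    (1 - β - m * η) * ∑ i, a i ^ 2 ≤ ∑ i, ∑ j, a i * a j * (ip (σ i) (σ j) / n) := by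
  have hn' : (0 : ℝ) < n := by exact_mod_cast hn
  have h' : ∀ i j : Fin m, i ≠ j →
      β - η ≤ |ip (σ i) (σ j)| / n ∧ |ip (σ i) (σ j)| / n ≤ β := by
    intro i j hij
    rcases lt_or_gt_of_ne hij with h1 | h1
    · exact h i j h1
    · rw [ip_comm]; exact h j i h1
  let i₀ : Fin m := ⟨0, hm⟩
  let s : Fin m → ℝ := fun i => if 0 ≤ ip (σ i₀) (σ i) then 1 else -1
  have hs : ∀ i, s i = 1 ∨ s i = -1 := fun i => by
    simp only [s]; split_ifs <;> simp
  have hsabs : ∀ i, s i * ip (σ i₀) (σ i) = |ip (σ i₀) (σ i)| := by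
    intro i
    simp only [s]
    split_ifs with h0
    · rw [abs_of_nonneg h0, one_mul]
    · rw [abs_of_neg (not_le.1 h0)]; ring
  have hpos : ∀ i, 1 / 2 * (n : ℝ) < s i * ip (σ i₀) (σ i) := by
    intro i
    rw [hsabs]
    by_cases hi : i₀ = i
    · rw [← hi, ip_self_cube (hσ i₀), abs_of_pos hn']
      linarith
    · have := (h' i₀ i hi).1
      rw [le_div_iff₀ hn'] at this
      nlinarith
  have key := gram_lower a s (fun i j => ip (σ i) (σ j) / n) (β := β) (η := η)
    (by linarith) hη hs (fun i => by rw [ip_self_cube (hσ i), div_self hn'.ne']) ?_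
  · simpa using key
  · intro i j hij
    have h1 := ip_triangle (hσ i) (hσ j) (hσ i₀) (hs i) (hs j)
    have h2 : 0 < s i * s j * ip (σ i) (σ j) := by linarith [hpos i, hpos j]
    have h3 : s i * s j * ip (σ i) (σ j) = |ip (σ i) (σ j)| := by
      rw [← abs_of_pos h2, abs_mul, abs_mul]
      rcases hs i with e | e <;> rcases hs j with e' | e' <;> rw [e, e'] <;> simp
    rw [← mul_div_assoc, h3]
    exact h' i j hij

/-- The coefficients, as a linear form in `X`, of
`n^{-1/2} ⟨σ i, √(1 - τ i ^ 2) X 0 + τ i X (i + 1)⟩`. -/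
noncomputable def coeff {m n : ℕ} (σ : Fin m → Fin n → ℝ) (τ : Fin m → ℝ)
    (i : Fin m) (a : Fin (m + 1)) (k : Fin n) : ℝ :=
  (Fin.cases (Real.sqrt (1 - τ i ^ 2)) (fun j => if j = i then τ i else 0) a : ℝ) *
    σ i k / Real.sqrt n

lemma coeff_apply {m n : ℕ} (σ : Fin m → Fin n → ℝ) (τ : Fin m → ℝ)
    (i : Fin m) (X : Fin (m + 1) → Fin n → ℝ) :
    ∑ a, ∑ k, coeff σ τ i a k * X a k =
      ip (σ i) (fun k => Real.sqrt (1 - τ i ^ 2) * X 0 k + τ i * X i.succ k) / Real.sqrt n := by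
  rw [Finset.sum_comm, ip, Finset.sum_div]
  refine Finset.sum_congr rfl fun k _ => ?_
  rw [Fin.sum_univ_succ]
  simp only [coeff, Fin.cases_zero, Fin.cases_succ]
  rw [Finset.sum_eq_single i]
  · simp only [if_true]; ring
  · intro j _ hj
    simp [hj]
  · simp

/-- The covariance form of the `m` linear forms is bounded below by `l = 1 - β - m η`. The block
`X 0` contributes at least `l ∑ (1 - τ i ^ 2) g i ^ 2`, the remaining blocks exactly
`∑ τ i ^ 2 g i ^ 2`, and `l ≤ 1`. -/
lemma coeff_lower {m n : ℕ} (hm : 0 < m) (hn : 0 < n) (σ : Fin m → Fin n → ℝ) (τ : Fin m → ℝ)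
    {β η : ℝ} (hη : 0 ≤ η) (hβη : 1 / 2 < β - η) (hσ : ∀ i, isCube (σ i))
    (h : ∀ i j : Fin m, i < j → β - η ≤ |ip (σ i) (σ j)| / n ∧ |ip (σ i) (σ j)| / n ≤ β)
    (hτ : ∀ i, τ i ∈ Set.Icc (0 : ℝ) 1) (g : Fin m → ℝ) :
    (1 - β - m * η) * ∑ i, g i ^ 2 ≤ ∑ a, ∑ k, (∑ i, g i * coeff σ τ i a k) ^ 2 := by
  have hn' : (0 : ℝ) < n := by exact_mod_cast hn
  have hsq : Real.sqrt n ^ 2 = n := Real.sq_sqrt hn'.le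
  have hτ1 : ∀ i, τ i ^ 2 ≤ 1 := fun i => by
    obtain ⟨h1, h2⟩ := hτ i
    nlinarith
  rw [Fin.sum_univ_succ]
  have e0 : ∑ k, (∑ i, g i * coeff σ τ i 0 k) ^ 2 =
      ∑ i, ∑ j, (g i * Real.sqrt (1 - τ i ^ 2)) * (g j * Real.sqrt (1 - τ j ^ 2)) *
        (ip (σ i) (σ j) / n) := by
    simp_rw [pow_two (∑ i, _), Finset.sum_mul_sum]
    rw [Finset.sum_comm]
    refine Finset.sum_congr rfl fun i _ => ?_
    rw [Finset.sum_comm]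
    refine Finset.sum_congr rfl fun j _ => ?_
    simp only [ip, Finset.sum_div, Finset.mul_sum, coeff, Fin.cases_zero]
    refine Finset.sum_congr rfl fun k _ => ?_
    generalize Real.sqrt n = q at hsq
    rw [← hsq]
    ring
  have e1 : ∀ j : Fin m, ∑ k, (∑ i, g i * coeff σ τ i j.succ k) ^ 2 = τ j ^ 2 * g j ^ 2 := by
    intro j
    have : ∀ k, (∑ i, g i * coeff σ τ i j.succ k) ^ 2 = τ j ^ 2 * g j ^ 2 / n := by
      intro k
      rw [Finset.sum_eq_single j]
      · simp only [coeff, Fin.cases_succ, if_true]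
        have : σ j k ^ 2 = 1 := by rcases hσ j k with h | h <;> rw [h] <;> norm_num
        rw [mul_pow, div_pow, mul_pow, this, hsq]
        ring
      · intro i _ hi
        simp [coeff, hi.symm]
      · simp
    simp only [this, Finset.sum_const, Finset.card_univ, Fintype.card_fin, nsmul_eq_mul]
    field_simp
  simp_rw [e1]
  rw [e0]
  have h1 := overlap_gram_lower hm hn σ hη hβη hσ h (fun i => g i * Real.sqrt (1 - τ i ^ 2))
  have hl : 1 - β - m * η ≤ 1 := by
    have : 0 ≤ (m : ℝ) * η := by positivity
    linarith
  have h2 : (1 - β - m * η) * ∑ i, g i ^ 2 ≤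
      (1 - β - m * η) * ∑ i, (g i * Real.sqrt (1 - τ i ^ 2)) ^ 2 + ∑ j, τ j ^ 2 * g j ^ 2 := by
    simp_rw [Finset.mul_sum, ← Finset.sum_add_distrib]
    refine Finset.sum_le_sum fun i _ => ?_
    rw [mul_pow, Real.sq_sqrt (by linarith [hτ1 i])]
    nlinarith [mul_nonneg (sub_nonneg.2 hl) (mul_nonneg (sq_nonneg (τ i)) (sq_nonneg (g i)))]
  linarith

/-! ### Counting tuples of cube points -/

/-- The binary cube `{-1, 1}^n` as a finite set. -/
noncomputable def cube (n : ℕ) : Finset (Fin n → ℝ) := Fintype.piFinset fun _ => {1, -1}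

lemma mem_cube {n : ℕ} {x : Fin n → ℝ} : x ∈ cube n ↔ isCube x := by
  simp [cube, isCube]

lemma card_cube (n : ℕ) : (cube n).card = 2 ^ n := by
  have : ({1, -1} : Finset ℝ).card = 2 := by
    rw [Finset.card_pair]; norm_num
  simp [cube, Fintype.card_piFinset, this]

/-- The cube points whose absolute normalized overlap with `s` is at least `1 - κ`. -/
noncomputable def near {n : ℕ} (κ : ℝ) (s : Fin n → ℝ) : Finset (Fin n → ℝ) :=
  (cube n).filter fun x => (1 - κ) * n ≤ |ip s x|

lemma sum_exp_ip {n : ℕ} {s : Fin n → ℝ} (hs : isCube s) (r : ℝ) :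
    ∑ x ∈ cube n, Real.exp (r * ip s x) = (Real.exp r + Real.exp (-r)) ^ n := by
  have h : ∀ x : Fin n → ℝ, Real.exp (r * ip s x) = ∏ k, Real.exp (r * (s k * x k)) := by
    intro x
    rw [← Real.exp_sum, ip, Finset.mul_sum]
  simp_rw [h]
  rw [cube, ← Finset.prod_univ_sum (fun _ => ({1, -1} : Finset ℝ))
    (fun k y => Real.exp (r * (s k * y)))]
  have : ∀ k, ∑ y ∈ ({1, -1} : Finset ℝ), Real.exp (r * (s k * y))
      = Real.exp r + Real.exp (-r) := by
    intro k
    rw [Finset.sum_pair (by norm_num)]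
    rcases hs k with h | h <;> rw [h] <;> simp [add_comm]
  simp [this]

/-- Chernoff bound: each point of `near κ s` contributes at least `1` to
`∑ x, (exp(r ⟨s, x⟩) + exp(-r ⟨s, x⟩)) exp(-r (1 - κ) n)`. -/
lemma card_near_le {n : ℕ} {s : Fin n → ℝ} (hs : isCube s) (κ : ℝ) {r : ℝ} (hr : 0 ≤ r) :
    ((near κ s).card : ℝ) ≤ 2 * (Real.exp (r * κ) * (1 + Real.exp (-(2 * r)))) ^ n := by
  have h1 : ((near κ s).card : ℝ) ≤ ∑ x ∈ cube n,
      (Real.exp (r * ip s x) + Real.exp (-r * ip s x)) * Real.exp (-(r * ((1 - κ) * n))) := by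
    rw [Finset.card_eq_sum_ones, Nat.cast_sum]
    refine le_trans (Finset.sum_le_sum (g := fun x =>
      (Real.exp (r * ip s x) + Real.exp (-r * ip s x)) * Real.exp (-(r * ((1 - κ) * n)))) ?_)
      (Finset.sum_le_sum_of_subset_of_nonneg (Finset.filter_subset _ _) ?_)
    · intro x hx
      have hx' : (1 - κ) * n ≤ |ip s x| := (Finset.mem_filter.1 hx).2
      have h2 : Real.exp (r * |ip s x|) ≤ Real.exp (r * ip s x) + Real.exp (-r * ip s x) := by
        rcases abs_cases (ip s x) with ⟨e, _⟩ | ⟨e, _⟩ <;> rw [e]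
        · linarith [Real.exp_pos (-r * ip s x)]
        · rw [mul_neg, ← neg_mul]; linarith [Real.exp_pos (r * ip s x)]
      calc ((1 : ℕ) : ℝ) ≤ Real.exp (r * |ip s x|) * Real.exp (-(r * ((1 - κ) * n))) := by
            rw [← Real.exp_add, Nat.cast_one, Real.one_le_exp_iff]
            nlinarith [mul_le_mul_of_nonneg_left hx' hr]
        _ ≤ _ := by gcongr
    · intro x _ _
      positivity
  refine h1.trans (le_of_eq ?_)
  rw [← Finset.sum_mul, Finset.sum_add_distrib, sum_exp_ip hs, sum_exp_ip hs, neg_neg,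
    add_comm (Real.exp (-r)), ← two_mul, mul_assoc]
  congr 1
  have : Real.exp (-(r * ((1 - κ) * n))) = Real.exp (-(r * (1 - κ))) ^ n := by
    rw [← Real.exp_nat_mul]; congr 1; ring
  rw [this, ← mul_pow]
  congr 1
  rw [add_mul, mul_add, ← Real.exp_add, ← Real.exp_add, ← Real.exp_add]
  congr 2 <;> ring_nf

/-- The exponential growth rate in `card_near_le` can be made at most `2 ^ (ε / 4)`: large `r`
controls the second factor, then small `κ` the first. -/
lemma exists_params {ε : ℝ} (hε : 0 < ε) : ∃ r κ : ℝ, 0 ≤ r ∧ 0 < κ ∧ κ ≤ 1 / 4 ∧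
    Real.exp (r * κ) * (1 + Real.exp (-(2 * r))) ≤ (2 : ℝ) ^ (ε / 4) := by
  set q : ℝ := (2 : ℝ) ^ (ε / 8) with hq
  have hq1 : 1 < q := Real.one_lt_rpow (by norm_num) (by positivity)
  have hlog : 0 < Real.log q := Real.log_pos hq1
  set r : ℝ := max 0 (-(Real.log (q - 1)) / 2) with hr
  have hr0 : 0 ≤ r := le_max_left _ _
  have hr1 : -(Real.log (q - 1)) / 2 ≤ r := le_max_right _ _
  refine ⟨r, min (1 / 4) (Real.log q / (r + 1)), hr0, lt_min (by norm_num) (by positivity),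
    min_le_left _ _, ?_⟩
  have h1 : Real.exp (-(2 * r)) ≤ q - 1 := by
    rw [← Real.le_log_iff_exp_le (by linarith)]
    linarith
  have h2 : Real.exp (r * min (1 / 4) (Real.log q / (r + 1))) ≤ q := by
    rw [← Real.le_log_iff_exp_le (by linarith)]
    calc r * min (1 / 4) (Real.log q / (r + 1)) ≤ r * (Real.log q / (r + 1)) := by
          gcongr; exact min_le_right _ _
      _ ≤ Real.log q := by
          rw [← mul_div_assoc, div_le_iff₀ (by positivity)]
          nlinarith
  calc _ ≤ q * q := by gcongr; linarith
    _ = _ := by rw [hq, ← Real.rpow_add (by norm_num)]; congr 1; ring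

/-- The `m`-tuples of cube points contained in `near κ s` for some cube point `s`. -/
noncomputable def tuples (m n : ℕ) (κ : ℝ) : Finset (Fin m → Fin n → ℝ) :=
  (cube n).biUnion fun s => Fintype.piFinset fun _ => near κ s

lemma card_tuples_le (m n : ℕ) {κ r M : ℝ} (hr : 0 ≤ r)
    (hM : Real.exp (r * κ) * (1 + Real.exp (-(2 * r))) ≤ M) :
    ((tuples m n κ).card : ℝ) ≤ 2 ^ n * (2 * M ^ n) ^ m := by
  have h1 : ((tuples m n κ).card : ℝ) ≤ ∑ s ∈ cube n, ((near κ s).card : ℝ) ^ m := by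
    have := Finset.card_biUnion_le (s := cube n)
      (t := fun s => Fintype.piFinset fun _ : Fin m => near κ s)
    simp only [Fintype.card_piFinset, Finset.prod_const, Finset.card_univ, Fintype.card_fin] at this
    exact_mod_cast this
  refine h1.trans ?_
  have h2 : ∀ s ∈ cube n, ((near κ s).card : ℝ) ^ m ≤ (2 * M ^ n) ^ m := by
    intro s hs
    have := card_near_le (mem_cube.1 hs) κ hr
    refine pow_le_pow_left₀ (by positivity) (this.trans ?_) m
    gcongr
  refine (Finset.sum_le_card_nsmul _ _ _ h2).trans (le_of_eq ?_)
  rw [card_cube, nsmul_eq_mul]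
  push_cast
  rfl

lemma mem_tuples {m n : ℕ} (hm : 0 < m) {σ : Fin m → Fin n → ℝ} {β η κ : ℝ}
    (hn : 0 < n) (hκ : 0 ≤ κ) (hβη : 1 - κ ≤ β - η) (hσ : ∀ i, isCube (σ i))
    (h : ∀ i j : Fin m, i < j → β - η ≤ |ip (σ i) (σ j)| / n ∧ |ip (σ i) (σ j)| / n ≤ β) :
    σ ∈ tuples m n κ := by
  have hn' : (0 : ℝ) < n := by exact_mod_cast hn
  rw [tuples, Finset.mem_biUnion]
  refine ⟨σ ⟨0, hm⟩, mem_cube.2 (hσ _), ?_⟩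
  rw [Fintype.mem_piFinset]
  intro i
  rw [near, Finset.mem_filter]
  refine ⟨mem_cube.2 (hσ i), ?_⟩
  by_cases hi : ⟨0, hm⟩ = i
  · rw [hi, ip_self_cube (hσ i), abs_of_pos hn']
    nlinarith
  · have hlt : (⟨0, hm⟩ : Fin m) < i := by
      rw [Fin.lt_def]
      exact Nat.pos_of_ne_zero fun h0 => hi (Fin.ext h0.symm)
    rw [← le_div_iff₀ hn']
    exact hβη.trans (h _ i hlt).1

/-! ### The union bound -/

/-- First-moment bound: the number of candidate pairs `(σ, τ)` times the small-ball probability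
for one of them. -/
lemma event_measure_le {m n : ℕ} (hm : 0 < m) (hn : 0 < n) {β η κ r M δ : ℝ} (hr : 0 ≤ r)
    (hM : Real.exp (r * κ) * (1 + Real.exp (-(2 * r))) ≤ M)
    (hκ : 0 ≤ κ) (hη : 0 ≤ η) (hβη : 1 - κ ≤ β - η) (hhalf : 1 / 2 < β - η)
    (hl : 0 < 1 - β - m * η) (hδ : 0 < δ)
    (I : Finset ℝ) (hI : ↑I ⊆ Set.Icc (0 : ℝ) 1) :
    (Measure.pi fun _ : Fin (m + 1) => stdGaussian n)
      {X : Fin (m + 1) → Fin n → ℝ | ∃ σ : Fin m → Fin n → ℝ,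
        (∀ i, isCube (σ i)) ∧
        (∀ i j : Fin m, i < j →
          β - η ≤ |ip (σ i) (σ j)| / n ∧ |ip (σ i) (σ j)| / n ≤ β) ∧
        (∃ τ : Fin m → ℝ, (∀ i, τ i ∈ I) ∧
          ∀ i : Fin m,
            |ip (σ i) (fun k => Real.sqrt (1 - τ i ^ 2) * X 0 k + τ i * X i.succ k)|
              / Real.sqrt n ≤ δ)} ≤
      ENNReal.ofReal (2 ^ n * (2 * M ^ n) ^ m * (I.card : ℝ) ^ m *
        (Real.exp (1 / 2) * (δ / Real.sqrt (1 - β - m * η))) ^ m) := by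
  classical
  let good : (Fin m → Fin n → ℝ) → Prop := fun σ => (∀ i, isCube (σ i)) ∧
    ∀ i j : Fin m, i < j → β - η ≤ |ip (σ i) (σ j)| / n ∧ |ip (σ i) (σ j)| / n ≤ β
  let S := ((tuples m n κ).filter good) ×ˢ Fintype.piFinset fun _ : Fin m => I
  let E : (Fin m → Fin n → ℝ) × (Fin m → ℝ) → Set (Fin (m + 1) → Fin n → ℝ) := fun p =>
    {X | ∀ i, |∑ a, ∑ k, coeff p.1 p.2 i a k * X a k| ≤ δ}
  set B : ℝ := (Real.exp (1 / 2) * (δ / Real.sqrt (1 - β - m * η))) ^ m with hB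
  have hB0 : 0 ≤ B := by positivity
  have hE : ∀ p ∈ S, (Measure.pi fun _ : Fin (m + 1) => stdGaussian n) (E p)
      ≤ ENNReal.ofReal B := by
    intro p hp
    obtain ⟨h1, h2⟩ := Finset.mem_product.1 hp
    obtain ⟨hc, ho⟩ := (Finset.mem_filter.1 h1).2
    have := smallBall (coeff p.1 p.2) hl hδ (coeff_lower hm hn p.1 p.2 hη hhalf hc ho
      fun i => hI (Fintype.mem_piFinset.1 h2 i))
    rw [Fintype.card_fin] at this
    exact this
  refine (measure_mono (t := ⋃ p ∈ S, E p) ?_).trans ?_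
  · rintro X ⟨σ, hc, ho, τ, hτ, hX⟩
    simp only [Set.mem_iUnion]
    refine ⟨(σ, τ), ?_, fun i => ?_⟩
    · exact Finset.mem_product.2 ⟨Finset.mem_filter.2 ⟨mem_tuples hm hn hκ hβη hc ho, hc, ho⟩,
        Fintype.mem_piFinset.2 hτ⟩
    · rw [coeff_apply, abs_div, abs_of_nonneg (Real.sqrt_nonneg _)]
      exact hX i
  · refine (measure_biUnion_finset_le _ _).trans ((Finset.sum_le_card_nsmul _ _ _ hE).trans ?_)
    have hS : (S.card : ℝ) ≤ 2 ^ n * (2 * M ^ n) ^ m * (I.card : ℝ) ^ m := by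
      have h1 : S.card ≤ (tuples m n κ).card * I.card ^ m := by
        simp only [S, Finset.card_product, Fintype.card_piFinset, Finset.prod_const,
          Finset.card_univ, Fintype.card_fin]
        exact Nat.mul_le_mul_right _ (Finset.card_filter_le _ _)
      calc (S.card : ℝ) ≤ (tuples m n κ).card * (I.card : ℝ) ^ m := by exact_mod_cast h1
        _ ≤ _ := by gcongr; exact card_tuples_le m n hr hM
    rw [nsmul_eq_mul, ← ENNReal.ofReal_natCast, ← ENNReal.ofReal_mul (by positivity)]
    exact ENNReal.ofReal_le_ofReal (by gcongr)

/-- `m`-OGP (ensemble version, constant `m`) for energy levels `C · 2^{-nε}`. -/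
theorem m_ogp_const (ε : ℝ) (hε : 0 < ε) (C : ℝ) (hC : 0 < C) :
    ∃ m : ℕ, 0 < m ∧ ∃ β η : ℝ, 0 < η ∧ η < β ∧ β < 1 ∧
      ∀ I : ℕ → Finset ℝ, (∀ n, ↑(I n) ⊆ Set.Icc (0 : ℝ) 1) →
        Tendsto (fun n : ℕ => Real.logb 2 ((I n).card) / n) atTop (nhds 0) →
        ∃ c : ℝ, 0 < c ∧ ∃ N : ℕ, ∀ n : ℕ, N ≤ n →
          (Measure.pi fun _ : Fin (m + 1) => stdGaussian n)
            {X : Fin (m + 1) → Fin n → ℝ | ∃ σ : Fin m → Fin n → ℝ,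
              (∀ i, isCube (σ i)) ∧
              (∀ i j : Fin m, i < j →
                β - η ≤ |ip (σ i) (σ j)| / n ∧ |ip (σ i) (σ j)| / n ≤ β) ∧
              (∃ τ : Fin m → ℝ, (∀ i, τ i ∈ I n) ∧
                ∀ i : Fin m,
                  |ip (σ i) (fun k => Real.sqrt (1 - τ i ^ 2) * X 0 k + τ i * X i.succ k)|
                    / Real.sqrt n ≤ C * (2 : ℝ) ^ (-(n : ℝ) * ε))} ≤
            ENNReal.ofReal ((2 : ℝ) ^ (-c * (n : ℝ))) := by
  obtain ⟨r, κ, hr, hκ, hκ4, hM⟩ := exists_params hε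
  -- `m ε ≥ 8` makes the final exponent `n (1 - m ε / 4)` at most `-n`.
  obtain ⟨m, hm⟩ := exists_nat_ge (8 / ε)
  have hmR : 0 < (m : ℝ) := lt_of_lt_of_le (by positivity) hm
  have hm0 : 0 < m := by exact_mod_cast hmR
  have hm1 : (1 : ℝ) ≤ m := by exact_mod_cast hm0
  have hmε : 8 ≤ m * ε := by rwa [div_le_iff₀ hε] at hm
  have hη4 : κ / (4 * m) ≤ κ / 4 := by
    rw [div_le_div_iff₀ (by positivity) (by norm_num)]
    nlinarith
  refine ⟨m, hm0, 1 - κ / 2, κ / (4 * m), by positivity, by linarith, by linarith, ?_⟩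
  intro I hI hlim
  refine ⟨1, one_pos, ?_⟩
  have hl : 1 - (1 - κ / 2) - m * (κ / (4 * m)) = κ / 4 := by field_simp; ring
  -- `K` collects all factors that are raised to the power `m` and do not depend on `n`.
  set K : ℝ := 2 * (Real.exp (1 / 2) * (C / Real.sqrt (κ / 4))) with hK
  have hK0 : 0 < K := by positivity
  have h2q : (1 : ℝ) < (2 : ℝ) ^ (ε / 4) := Real.one_lt_rpow (by norm_num) (by positivity)
  have ev1 : ∀ᶠ n : ℕ in atTop, K ≤ ((2 : ℝ) ^ (ε / 4)) ^ n :=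
    (tendsto_pow_atTop_atTop_of_one_lt h2q).eventually_ge_atTop K
  have ev2 : ∀ᶠ n : ℕ in atTop, Real.logb 2 ((I n).card) / n < ε / 4 :=
    hlim.eventually_lt_const (by positivity)
  obtain ⟨N, hN⟩ := eventually_atTop.1 (ev1.and (ev2.and (eventually_gt_atTop 0)))
  refine ⟨N, fun n hn => ?_⟩
  obtain ⟨hKn, hIn, hn0⟩ := hN n hn
  have hn' : (0 : ℝ) < n := by exact_mod_cast hn0
  refine (event_measure_le (κ := κ) (M := (2 : ℝ) ^ (ε / 4)) hm0 hn0 hr hM hκ.le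
    (by positivity) (by linarith) (by linarith) (by rw [hl]; positivity) (by positivity)
    (I n) (hI n)).trans (ENNReal.ofReal_le_ofReal ?_)
  rw [hl]
  -- In terms of `u = 2 ^ (n ε / 4)` the energy level is `C u⁻⁴`; the overlap count per point is
  -- at most `2 u`, the cardinality of `I n` at most `u`, and `K ≤ u`, leaving `u⁻¹` per point.
  set u : ℝ := ((2 : ℝ) ^ (ε / 4)) ^ n with hu
  have hu0 : 0 < u := by positivity
  have hu' : u = (2 : ℝ) ^ ((n : ℝ) * (ε / 4)) := by
    rw [hu, ← Real.rpow_natCast, ← Real.rpow_mul (by norm_num), mul_comm]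
  have hcard : ((I n).card : ℝ) ≤ u := by
    rcases Nat.eq_zero_or_pos (I n).card with h0 | h0
    · rw [h0]; simpa using hu0.le
    · rw [hu', ← Real.logb_le_iff_le_rpow (by norm_num) (by exact_mod_cast h0)]
      rw [div_lt_iff₀ hn'] at hIn
      linarith
  have hδ : (2 : ℝ) ^ (-(n : ℝ) * ε) = (u ^ 4)⁻¹ := by
    rw [hu', ← Real.rpow_natCast, ← Real.rpow_mul (by norm_num), ← Real.rpow_neg (by norm_num)]
    congr 1
    push_cast
    ring
  rw [hδ]
  calc 2 ^ n * (2 * u) ^ m * ((I n).card : ℝ) ^ m *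
        (Real.exp (1 / 2) * (C * (u ^ 4)⁻¹ / Real.sqrt (κ / 4))) ^ m
      = 2 ^ n * (K * (I n).card * (u ^ 3)⁻¹) ^ m := by
        rw [mul_assoc, mul_assoc, ← mul_pow, ← mul_pow, hK]
        congr 2
        field_simp
    _ ≤ 2 ^ n * (u * u * (u ^ 3)⁻¹) ^ m := by gcongr
    _ = 2 ^ n * (u⁻¹) ^ m := by
        congr 2
        field_simp
    _ = (2 : ℝ) ^ ((n : ℝ) - n * (ε / 4) * m) := by
        rw [Real.rpow_sub (by norm_num), Real.rpow_natCast, inv_pow, hu', Real.rpow_mul_natCast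
          (by norm_num)]
        rfl
    _ ≤ (2 : ℝ) ^ (-1 * (n : ℝ)) := by
        refine Real.rpow_le_rpow_of_exponent_le (by norm_num) ?_
        nlinarith
end

section
/- Fix η > 0, m ∈ ℕ, and a function f : ℕ → ℝ₊ with f(n) → ∞ and f(n) = o(n). For X ∼ N(0, I_n), let A_n be the event that for every β ∈ [0,1] there exists an m-tuple (σ^(1), …, σ^(m)) of points of B_n such that β − η ≤ (1/n)|⟨σ^(i), σ^(j)⟩| ≤ β + η for all 1 ≤ i < j ≤ m and n^{−1/2}|⟨σ^(i), X⟩| ≤ 2^{−f(n)} for all 1 ≤ i ≤ m. Then P(A_n) → 1 as n → ∞. -/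
/-!
The first `N = ⌈a n⌉` coordinates, with `a` small compared with `η`, are reserved for correction.
On all coordinates, template vectors are fixed deterministically: they all equal `1` on the first
`≈ β n` coordinates and are distinct Rademacher functions (`rad`) on the rest, so their pairwise
inner products are `β n + O(1)` (`abs_ip_template_sub_le`). Changing signs on the reserved block
moves the overlaps by at most `2 N / n ≤ η / 8 + o(1)`. It therefore suffices that, for each single
template, signs on the block can be chosen to make the total inner product with `X` at most
`√n 2^{-f(n)}`: no joint statement about the `m` vectors is needed, only a union bound over the `m`
templates and a finite net of values of `β`.

For one template, the frozen coordinates contribute a target of size `O(√n)` independent of the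
block. With `N` Gaussian block variables, consider `smoothCount`, the average over all sign vectors
`ρ` of `exp (-(⟨ρ, X⟩ - t)² / (2 s))` with `s = 2^{-2 f(n)} / 2`. Its mean is explicit. For its second
moment, a pair `ρ, ρ'` is split according to the coordinates of agreement and disagreement, whose
signed sums `P`, `Q` are independent Gaussians, and
`(P + Q - t)² + (P - Q - t)² = 2 (P - t)² + 2 Q²` gives again an explicit formula in the overlap of
`ρ` and `ρ'` (`integral_smooth_pair`). Overlaps at most `κ N` contribute a factor close to `1`;
larger ones cost at most `2^{f(n)}` times a polynomial but have proportion at most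
`2 exp (-κ² N / 2)`, which wins because `f(n) = o(n)`. Chebyshev's inequality
(`measure_smoothCount_le`) shows that `smoothCount` is at least half its mean with probability close
to `1`; since the mean exceeds `2 e^{-n}`, some `ρ` is within `√n 2^{-f(n)}` of the target
(`measure_block_fail_le`, `eventually_block_fail_le`).
-/

open MeasureTheory ProbabilityTheory Filter

/-! ### Gaussian windows of signed Gaussian sums -/

/-- `E exp (-(Y - t)² / (2 s))` for `Y ∼ N(0, v)`. -/
noncomputable def smoothMean (v s t : ℝ) : ℝ :=
  Real.sqrt (s / (v + s)) * Real.exp (-t ^ 2 / (2 * (v + s)))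

lemma integral_smooth_gaussianReal (v : NNReal) {s : ℝ} (hs : 0 < s) (t : ℝ) :
    ∫ y, Real.exp (-(y - t) ^ 2 / (2 * s)) ∂(gaussianReal 0 v) = smoothMean v s t := by
  unfold smoothMean
  rcases eq_or_ne v 0 with rfl | hv
  · rw [gaussianReal_zero_var, integral_dirac]
    simp [hs.ne']
  have hv' : (0 : ℝ) < v := by positivity
  rw [integral_gaussianReal_eq_integral_smul hv]
  -- completing the square
  have h1 : ∀ y : ℝ, gaussianPDFReal 0 v y • Real.exp (-(y - t) ^ 2 / (2 * s)) =
      ((Real.sqrt (2 * Real.pi * v))⁻¹ * Real.exp (-t ^ 2 / (2 * (v + s)))) *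
        Real.exp (-((v + s) / (2 * s * v)) * (y - t * v / (v + s)) ^ 2) := by
    intro y
    rw [gaussianPDFReal, smul_eq_mul, mul_assoc _ (Real.exp _) (Real.exp _),
      mul_assoc _ (Real.exp _) (Real.exp _), ← Real.exp_add, ← Real.exp_add]
    congr 2
    field_simp
    ring
  simp_rw [h1]
  rw [integral_const_mul,
    integral_sub_right_eq_self (fun y : ℝ => Real.exp (-((v + s) / (2 * s * v)) * y ^ 2)),
    integral_gaussian, mul_right_comm]
  congr 1
  rw [← Real.sqrt_inv, ← Real.sqrt_mul (by positivity)]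
  congr 1
  field_simp

section block

variable {ι : Type*} [Fintype ι]

lemma map_signed_sum (S : Finset ι) (c : ι → ℝ) (hc : ∀ i, c i ^ 2 = 1) :
    (Measure.pi fun _ : ι => gaussianReal 0 1).map (fun X => ∑ i ∈ S, c i * X i)
      = gaussianReal 0 (S.card : NNReal) := by
  classical
  induction S using Finset.induction_on with
  | empty => simp [Measure.map_const]
  | insert a S ha ih =>
    have hind : iIndepFun (fun (i : ι) (X : ι → ℝ) => c i * X i)
        (Measure.pi fun _ : ι => gaussianReal 0 1) :=
      iIndepFun_pi (X := fun i x => c i * x) (fun i => by fun_prop)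
    have h2 := hind.indepFun_finsetSum_of_notMem (fun i => by fun_prop) ha
    have h1 : (Measure.pi fun _ : ι => gaussianReal 0 1).map (fun X => c a * X a)
        = gaussianReal 0 1 := by
      have : (fun X : ι → ℝ => c a * X a) = (fun x => c a * x) ∘ (fun X => X a) := rfl
      rw [this, ← Measure.map_map (by fun_prop) (by fun_prop),
        (measurePreserving_eval (fun _ : ι => gaussianReal 0 1) a).map_eq,
        gaussianReal_map_const_mul]
      congr 1
      · simp
      · ext; simp [hc]
    have h3 := gaussianReal_add_gaussianReal_of_indepFun (P := Measure.pi fun _ : ι => gaussianReal 0 1)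
      (X := ∑ i ∈ S, fun X : ι → ℝ => c i * X i) (Y := fun X => c a * X a) h2
      (by rw [← ih]; congr 1; ext X; simp) h1
    have h4 : (fun X : ι → ℝ => ∑ i ∈ insert a S, c i * X i) =
      (∑ i ∈ S, fun X : ι → ℝ => c i * X i) + fun X => c a * X a := by
      ext X; simp [Finset.sum_insert ha, add_comm]
    rw [h4, h3, Finset.card_insert_of_notMem ha]
    simp

lemma integral_smooth_sum (S : Finset ι) (c : ι → ℝ) (hc : ∀ i, c i ^ 2 = 1)
    {s : ℝ} (hs : 0 < s) (t : ℝ) :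
    ∫ X, Real.exp (-(∑ i ∈ S, c i * X i - t) ^ 2 / (2 * s))
      ∂(Measure.pi fun _ : ι => gaussianReal 0 1) = smoothMean S.card s t := by
  have h := integral_smooth_gaussianReal (S.card : NNReal) hs t
  rw [← map_signed_sum S c hc, integral_map
    (Measurable.aemeasurable (by fun_prop))
    (Measurable.aestronglyMeasurable (by fun_prop))] at h
  simpa using h

/-- For two sign vectors `c`, `c'` the smoothed second moment factorizes: with `P`, `Q` the
contributions of the coordinates where `c` and `c'` agree and disagree, the two signed sums are
`P + Q` and `P - Q`, and `(P + Q - t)² + (P - Q - t)² = 2 (P - t)² + 2 Q²`. -/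
lemma integral_smooth_pair [DecidableEq ι] (c c' : ι → ℝ) (hc : ∀ i, c i ^ 2 = 1)
    (hc' : ∀ i, c' i ^ 2 = 1) {s : ℝ} (hs : 0 < s) (t : ℝ) :
    ∫ X, Real.exp (-(∑ i, c i * X i - t) ^ 2 / (2 * s)) *
        Real.exp (-(∑ i, c' i * X i - t) ^ 2 / (2 * s))
      ∂(Measure.pi fun _ : ι => gaussianReal 0 1) =
    smoothMean ((Fintype.card ι + ∑ i, c i * c' i) / 2) (s / 2) t *
      smoothMean ((Fintype.card ι - ∑ i, c i * c' i) / 2) (s / 2) 0 := by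
  classical
  set S : Finset ι := Finset.univ.filter fun i => c i = c' i with hS
  have hneg : ∀ i ∈ Sᶜ, c' i = - c i := by
    intro i hi
    have h1 : c i ≠ c' i := by simpa [hS] using hi
    have h2 : (c' i - c i) * (c' i + c i) = 0 := by linear_combination hc' i - hc i
    rcases mul_eq_zero.1 h2 with h | h
    · exact absurd (by linarith) h1
    · linarith
  have hpos : ∀ i ∈ S, c' i = c i := fun i hi => by
    have : c i = c' i := by simpa [hS] using hi
    exact this.symm
  have hcard : (S.card : ℝ) + (Sᶜ.card : ℝ) = Fintype.card ι := by
    exact_mod_cast Finset.card_add_card_compl S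
  have hx : ∑ i, c i * c' i = (S.card : ℝ) - (Sᶜ.card : ℝ) := by
    rw [← Finset.sum_add_sum_compl S]
    have e1 : ∑ i ∈ S, c i * c' i = S.card := by
      rw [Finset.sum_congr rfl (g := fun _ => (1 : ℝ))]
      · simp
      · intro i hi; rw [hpos i hi, ← hc i]; ring
    have e2 : ∑ i ∈ Sᶜ, c i * c' i = -(Sᶜ.card : ℝ) := by
      rw [Finset.sum_congr rfl (g := fun _ => (-1 : ℝ))]
      · simp
      · intro i hi; rw [hneg i hi, ← hc i]; ring
    rw [e1, e2]; ring
  have ha : ((Fintype.card ι : ℝ) + ∑ i, c i * c' i) / 2 = S.card := by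
    rw [hx, ← hcard]; ring
  have hd : ((Fintype.card ι : ℝ) - ∑ i, c i * c' i) / 2 = (Sᶜ.card : ℝ) := by
    rw [hx, ← hcard]; ring
  rw [ha, hd, ← integral_smooth_sum S c hc (half_pos hs) t,
    ← integral_smooth_sum Sᶜ c hc (half_pos hs) 0]
  have hind : iIndepFun (fun (i : ι) (X : ι → ℝ) => X i)
      (Measure.pi fun _ : ι => gaussianReal 0 1) :=
    iIndepFun_pi (X := fun i x => x) (fun i => by fun_prop)
  have hind2 := hind.indepFun_finset S Sᶜ disjoint_compl_right (fun i => by fun_prop)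
  have hind3 := hind2.comp
    (φ := fun Y : S → ℝ => Real.exp (-(∑ i : S, c i * Y i - t) ^ 2 / (2 * (s / 2))))
    (ψ := fun Y : (Sᶜ : Finset ι) → ℝ => Real.exp (-(∑ i : (Sᶜ : Finset ι), c i * Y i - 0) ^ 2 / (2 * (s / 2))))
    (by fun_prop) (by fun_prop)
  have hs1 : ∀ X : ι → ℝ, ∑ i : S, c i * X i = ∑ i ∈ S, c i * X i := fun X =>
    Finset.sum_coe_sort S (fun i => c i * X i)
  have hs2 : ∀ X : ι → ℝ, ∑ i : (Sᶜ : Finset ι), c i * X i = ∑ i ∈ Sᶜ, c i * X i := fun X =>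
    Finset.sum_coe_sort Sᶜ (fun i => c i * X i)
  have h5 := hind3.integral_fun_mul_eq_mul_integral
    (Measurable.aestronglyMeasurable (by fun_prop))
    (Measurable.aestronglyMeasurable (by fun_prop))
  simp only [Function.comp_def, hs1, hs2] at h5
  rw [← h5]
  refine integral_congr_ae (ae_of_all _ fun X => ?_)
  have e1 : ∑ i, c i * X i = ∑ i ∈ S, c i * X i + ∑ i ∈ Sᶜ, c i * X i :=
    (Finset.sum_add_sum_compl S _).symm
  have e2 : ∑ i, c' i * X i = ∑ i ∈ S, c i * X i - ∑ i ∈ Sᶜ, c i * X i := by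
    rw [← Finset.sum_add_sum_compl S, sub_eq_add_neg, ← Finset.sum_neg_distrib]
    congr 1
    · exact Finset.sum_congr rfl fun i hi => by rw [hpos i hi]
    · exact Finset.sum_congr rfl fun i hi => by rw [hneg i hi]; ring
  simp only [e1, e2, ← Real.exp_add]
  congr 1
  field_simp
  ring

end block

/-! ### Comparison of pair terms with the squared mean -/

lemma smoothMean_pos {v s : ℝ} (hv : 0 ≤ v) (hs : 0 < s) (t : ℝ) : 0 < smoothMean v s t := by
  unfold smoothMean; positivity

lemma smoothMean_sq {v s : ℝ} (hv : 0 ≤ v) (hs : 0 < s) (t : ℝ) :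
    smoothMean v s t ^ 2 = s / (v + s) * Real.exp (-t ^ 2 / (v + s)) := by
  unfold smoothMean
  rw [mul_pow, Real.sq_sqrt (by positivity), ← Real.exp_nat_mul]
  congr 2
  field_simp
  norm_num
  ring

lemma smoothMean_pair {N x s t : ℝ} (hs : 0 < s) (hx : |x| ≤ N) :
    smoothMean ((N + x) / 2) (s / 2) t * smoothMean ((N - x) / 2) (s / 2) 0 =
      Real.sqrt (s ^ 2 / ((N + s) ^ 2 - x ^ 2)) * Real.exp (-t ^ 2 / (N + s + x)) := by
  obtain ⟨h1, h2⟩ := abs_le.1 hx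
  unfold smoothMean
  have e1 : s / 2 / ((N + x) / 2 + s / 2) = s / (N + s + x) := by
    have : N + s + x ≠ 0 := by linarith
    have : N + x + s ≠ 0 := by linarith
    field_simp; ring
  have e2 : s / 2 / ((N - x) / 2 + s / 2) = s / (N + s - x) := by
    have : N + s - x ≠ 0 := by linarith
    have : N - x + s ≠ 0 := by linarith
    field_simp; ring
  have e3 : 2 * ((N + x) / 2 + s / 2) = N + s + x := by ring
  rw [e1, e2, e3]
  simp only [ne_eq, OfNat.ofNat_ne_zero, not_false_eq_true, zero_pow, neg_zero, zero_div,
    Real.exp_zero, mul_one]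
  rw [mul_right_comm, ← Real.sqrt_mul (div_nonneg hs.le (by linarith)), div_mul_div_comm]
  congr 3 <;> ring

/-- Sign vectors with small overlap `x` contribute almost the square of the mean. -/
lemma smoothMean_pair_le_near {N x s t κ K : ℝ} (hs : 0 < s) (hN : 0 ≤ N) (hκ0 : 0 ≤ κ)
    (hκ1 : κ < 1) (hx : |x| ≤ κ * N) (hK : t ^ 2 ≤ K * (N + s)) :
    smoothMean ((N + x) / 2) (s / 2) t * smoothMean ((N - x) / 2) (s / 2) 0 ≤
      smoothMean N s t ^ 2 * (Real.exp (K * κ) / (1 - κ)) := by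
  have hκ' : 0 < 1 - κ := by linarith
  have hxN : |x| ≤ N := hx.trans (by nlinarith)
  rw [smoothMean_pair hs hxN, smoothMean_sq hN hs]
  set M := N + s with hM
  have hM0 : 0 < M := by positivity
  have hxM : |x| ≤ κ * M := hx.trans (by rw [hM]; nlinarith)
  obtain ⟨h1, h2⟩ := abs_le.1 hxM
  have hx2 : x ^ 2 ≤ (κ * M) ^ 2 := by rw [← sq_abs]; gcongr
  have hK0 : 0 ≤ K := by
    by_contra h
    nlinarith [sq_nonneg t]
  have hMx : 0 < M + x := by nlinarith
  have hden : (M * (1 - κ)) ^ 2 ≤ M ^ 2 - x ^ 2 := by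
    have : (κ * M) ^ 2 + (M * (1 - κ)) ^ 2 ≤ M ^ 2 := by
      nlinarith [mul_nonneg (mul_nonneg hκ0 hκ'.le) (sq_nonneg M)]
    linarith
  have hA : Real.sqrt (s ^ 2 / (M ^ 2 - x ^ 2)) ≤ s / (M * (1 - κ)) := by
    rw [Real.sqrt_le_left (by positivity), div_pow]
    gcongr
  have hB : -t ^ 2 / (M + x) ≤ -t ^ 2 / M + K * κ := by
    have h3 : t ^ 2 / M ≤ K := by rwa [div_le_iff₀ hM0]
    have h4 : t ^ 2 / M - t ^ 2 / (M + x) = t ^ 2 / M * (x / (M + x)) := by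
      field_simp; ring
    have h5 : x / (M + x) ≤ κ := by
      rw [div_le_iff₀ hMx]
      rcases le_total 0 x with h | h
      · nlinarith
      · nlinarith
    have h6 : t ^ 2 / M * (x / (M + x)) ≤ K * κ := by
      calc _ ≤ t ^ 2 / M * κ := by gcongr
        _ ≤ _ := by gcongr
    rw [neg_div, neg_div]; linarith
  calc _ ≤ s / (M * (1 - κ)) * Real.exp (-t ^ 2 / M + K * κ) := by gcongr
    _ = _ := by rw [Real.exp_add]; field_simp

/-- Crude bound valid for every overlap `x`. -/
lemma smoothMean_pair_le_far {N x s t K : ℝ} (hs : 0 < s) (hN : 0 ≤ N)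
    (hxN : |x| ≤ N) (hK : t ^ 2 ≤ K * (N + s)) :
    smoothMean ((N + x) / 2) (s / 2) t * smoothMean ((N - x) / 2) (s / 2) 0 ≤
      smoothMean N s t ^ 2 * (Real.sqrt ((N + s) / s) * Real.exp K) := by
  rw [smoothMean_pair hs hxN, smoothMean_sq hN hs]
  have hx2 : x ^ 2 ≤ N ^ 2 := by rw [← sq_abs]; gcongr
  have hden : s * (N + s) ≤ (N + s) ^ 2 - x ^ 2 := by nlinarith
  obtain ⟨h1, h2⟩ := abs_le.1 hxN
  set M := N + s with hM
  have hM0 : 0 < M := by positivity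
  have hMx : 0 < M + x := by linarith
  have h3 : t ^ 2 / M ≤ K := by rwa [div_le_iff₀ hM0]
  have hE : 1 ≤ Real.exp (-t ^ 2 / M) * Real.exp K := by
    rw [← Real.exp_add, neg_div]; exact Real.one_le_exp (by linarith)
  have hA : Real.sqrt (s ^ 2 / (M ^ 2 - x ^ 2)) ≤ Real.sqrt (s / M) := by
    apply Real.sqrt_le_sqrt
    calc s ^ 2 / (M ^ 2 - x ^ 2) ≤ s ^ 2 / (s * M) := by gcongr
      _ = s / M := by field_simp
  have hB : Real.exp (-t ^ 2 / (M + x)) ≤ 1 :=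
    Real.exp_le_one_iff.2 (div_nonpos_of_nonpos_of_nonneg (by nlinarith [sq_nonneg t]) hMx.le)
  have hC : Real.sqrt (s / M) = s / M * Real.sqrt (M / s) := by
    rw [Real.sqrt_eq_iff_mul_self_eq (by positivity) (by positivity)]
    have := Real.mul_self_sqrt (show 0 ≤ M / s by positivity)
    have h4 : s / M * √(M / s) * (s / M * √(M / s)) = (s / M) ^ 2 * (√(M / s) * √(M / s)) := by
      ring
    rw [h4, this]; field_simp
  calc _ ≤ Real.sqrt (s / M) * 1 := by gcongr
    _ ≤ Real.sqrt (s / M) * (Real.exp (-t ^ 2 / M) * Real.exp K) := by gcongr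
    _ = _ := by rw [hC]; ring

/-! ### First and second moment of the smoothed count -/

/-- The sign `±1` encoded by a Boolean. -/
def sg (b : Bool) : ℝ := if b then 1 else -1

lemma sg_sq (b : Bool) : sg b ^ 2 = 1 := by cases b <;> simp [sg]

lemma abs_sg (b : Bool) : |sg b| = 1 := by cases b <;> simp [sg]

lemma exp_window_le_one {s : ℝ} (hs : 0 < s) (y : ℝ) : Real.exp (-y ^ 2 / (2 * s)) ≤ 1 :=
  Real.exp_le_one_iff.2 (div_nonpos_of_nonpos_of_nonneg (by nlinarith [sq_nonneg y]) (by positivity))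

section secondMoment

variable {ι : Type*} [Fintype ι]

lemma abs_overlap_le (ρ ρ' : ι → Bool) :
    |∑ i, sg (ρ i) * sg (ρ' i)| ≤ (Fintype.card ι : ℝ) := by
  refine (Finset.abs_sum_le_sum_abs _ _).trans ?_
  simp [abs_mul, abs_sg]

lemma integrable_window {s : ℝ} (hs : 0 < s) (c : ι → ℝ) (t : ℝ) :
    Integrable (fun X : ι → ℝ => Real.exp (-(∑ i, c i * X i - t) ^ 2 / (2 * s)))
      (Measure.pi fun _ : ι => gaussianReal 0 1) := by
  refine Integrable.of_bound (C := 1) (Measurable.aestronglyMeasurable (by fun_prop))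
    (ae_of_all _ fun X => ?_)
  rw [Real.norm_of_nonneg (Real.exp_pos _).le]
  exact exp_window_le_one hs _

variable [DecidableEq ι]

/-- Exponential moment of the overlap with a uniformly random sign vector. -/
lemma sum_exp_overlap_le (ρ : ι → Bool) (l : ℝ) :
    ∑ ρ' : ι → Bool, Real.exp (l * ∑ i, sg (ρ i) * sg (ρ' i)) ≤
      2 ^ Fintype.card ι * Real.exp (l ^ 2 * Fintype.card ι / 2) := by
  have h1 : ∑ ρ' : ι → Bool, Real.exp (l * ∑ i, sg (ρ i) * sg (ρ' i)) =
      ∏ i : ι, ∑ b : Bool, Real.exp (l * (sg (ρ i) * sg b)) := by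
    rw [Finset.prod_univ_sum]
    simp only [Fintype.piFinset_univ, Finset.mul_sum, Real.exp_sum]
  have h2 : ∀ i, ∑ b : Bool, Real.exp (l * (sg (ρ i) * sg b)) = 2 * Real.cosh l := by
    intro i
    rw [Fintype.sum_bool, Real.cosh_eq]
    cases ρ i <;> simp [sg] <;> ring
  rw [h1, Finset.prod_congr rfl fun i _ => h2 i, Finset.prod_const, Finset.card_univ, mul_pow]
  gcongr
  calc Real.cosh l ^ Fintype.card ι ≤ (Real.exp (l ^ 2 / 2)) ^ Fintype.card ι :=
        pow_le_pow_left₀ (Real.cosh_pos l).le (Real.cosh_le_exp_half_sq l) _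
    _ = _ := by rw [← Real.exp_nat_mul]; congr 1; ring

/-- Chernoff bound for the overlap, with each indicator dominated by exponentials. -/
lemma card_overlap_le (ρ : ι → Bool) {κ : ℝ} (hκ : 0 ≤ κ) :
    ∑ ρ' : ι → Bool,
      (if κ * Fintype.card ι < |∑ i, sg (ρ i) * sg (ρ' i)| then (1 : ℝ) else 0) ≤
      2 ^ Fintype.card ι * (2 * Real.exp (-(κ ^ 2 * Fintype.card ι / 2))) := by
  set N : ℝ := (Fintype.card ι : ℝ) with hN
  have hb : ∀ x : ℝ, (if κ * N < |x| then (1 : ℝ) else 0) ≤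
      Real.exp (-(κ ^ 2 * N)) * (Real.exp (κ * x) + Real.exp (-κ * x)) := by
    intro x
    split_ifs with h
    · rcases lt_abs.1 h with h | h
      · have : 1 ≤ Real.exp (-(κ ^ 2 * N)) * Real.exp (κ * x) := by
          rw [← Real.exp_add]; exact Real.one_le_exp (by nlinarith)
        nlinarith [Real.exp_pos (-(κ ^ 2 * N)), Real.exp_pos (-κ * x),
          mul_pos (Real.exp_pos (-(κ ^ 2 * N))) (Real.exp_pos (-κ * x))]
      · have : 1 ≤ Real.exp (-(κ ^ 2 * N)) * Real.exp (-κ * x) := by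
          rw [← Real.exp_add]; exact Real.one_le_exp (by nlinarith)
        nlinarith [mul_pos (Real.exp_pos (-(κ ^ 2 * N))) (Real.exp_pos (κ * x))]
    · positivity
  refine (Finset.sum_le_sum fun ρ' _ => hb _).trans ?_
  rw [← Finset.mul_sum, Finset.sum_add_distrib]
  have h1 := sum_exp_overlap_le ρ κ
  have h2 := sum_exp_overlap_le ρ (-κ)
  rw [neg_sq] at h2
  calc _ ≤ Real.exp (-(κ ^ 2 * N)) * (2 ^ Fintype.card ι * Real.exp (κ ^ 2 * N / 2) +
          2 ^ Fintype.card ι * Real.exp (κ ^ 2 * N / 2)) := by gcongr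
    _ = 2 ^ Fintype.card ι * (2 * (Real.exp (-(κ ^ 2 * N)) * Real.exp (κ ^ 2 * N / 2))) := by ring
    _ = _ := by rw [← Real.exp_add]; congr 3; ring

/-- The proportion of sign vectors whose signed sum is near `t`, smoothed with a Gaussian window
of variance `s`. -/
noncomputable def smoothCount (s t : ℝ) (X : ι → ℝ) : ℝ :=
  (2 ^ Fintype.card ι)⁻¹ *
    ∑ ρ : ι → Bool, Real.exp (-(∑ i, sg (ρ i) * X i - t) ^ 2 / (2 * s))

lemma measurable_smoothCount (s t : ℝ) :
    Measurable (smoothCount s t : (ι → ℝ) → ℝ) := by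
  unfold smoothCount; fun_prop

lemma smoothCount_nonneg (s t : ℝ) (X : ι → ℝ) : 0 ≤ smoothCount s t X := by
  unfold smoothCount; positivity

lemma smoothCount_le_of_forall {s t b : ℝ} (X : ι → ℝ)
    (h : ∀ ρ : ι → Bool, Real.exp (-(∑ i, sg (ρ i) * X i - t) ^ 2 / (2 * s)) ≤ b) :
    smoothCount s t X ≤ b := by
  unfold smoothCount
  rw [inv_mul_le_iff₀ (by positivity)]
  refine (Finset.sum_le_sum fun ρ _ => h ρ).trans ?_
  simp

lemma integral_smoothCount {s : ℝ} (hs : 0 < s) (t : ℝ) :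
    ∫ X, smoothCount s t X ∂(Measure.pi fun _ : ι => gaussianReal 0 1) =
      smoothMean (Fintype.card ι) s t := by
  unfold smoothCount
  rw [integral_const_mul, integral_finsetSum _ fun ρ _ => integrable_window hs _ t]
  simp_rw [fun ρ : ι → Bool => integral_smooth_sum Finset.univ (fun i => sg (ρ i))
    (fun i => sg_sq _) hs t]
  simp

lemma integral_smoothCount_sq_le {s : ℝ} (hs : 0 < s) {t κ K : ℝ} (hκ0 : 0 ≤ κ) (hκ1 : κ < 1)
    (hK : t ^ 2 ≤ K * (Fintype.card ι + s)) :
    ∫ X, smoothCount s t X ^ 2 ∂(Measure.pi fun _ : ι => gaussianReal 0 1) ≤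
      smoothMean (Fintype.card ι) s t ^ 2 * (Real.exp (K * κ) / (1 - κ) +
        Real.sqrt ((Fintype.card ι + s) / s) * Real.exp K *
          (2 * Real.exp (-(κ ^ 2 * Fintype.card ι / 2)))) := by
  set N : ℝ := (Fintype.card ι : ℝ) with hN
  have hN0 : 0 ≤ N := by positivity
  set g := smoothMean N s t with hg
  set A := Real.exp (K * κ) / (1 - κ) with hA
  have hA0 : 0 ≤ A := div_nonneg (Real.exp_pos _).le (by linarith)
  set B := Real.sqrt ((N + s) / s) * Real.exp K with hB
  have hB0 : 0 ≤ B := by positivity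
  have hsq : ∀ X : ι → ℝ, smoothCount s t X ^ 2 = ((2 ^ Fintype.card ι)⁻¹ ^ 2) *
      ∑ ρ : ι → Bool, ∑ ρ' : ι → Bool,
        Real.exp (-(∑ i, sg (ρ i) * X i - t) ^ 2 / (2 * s)) *
        Real.exp (-(∑ i, sg (ρ' i) * X i - t) ^ 2 / (2 * s)) := by
    intro X
    rw [smoothCount, mul_pow, sq (∑ ρ : ι → Bool, _), Finset.sum_mul_sum]
  have hint : ∀ ρ ρ' : ι → Bool, Integrable (fun X : ι → ℝ =>
      Real.exp (-(∑ i, sg (ρ i) * X i - t) ^ 2 / (2 * s)) *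
        Real.exp (-(∑ i, sg (ρ' i) * X i - t) ^ 2 / (2 * s)))
      (Measure.pi fun _ : ι => gaussianReal 0 1) := by
    intro ρ ρ'
    refine Integrable.of_bound (C := 1) (Measurable.aestronglyMeasurable (by fun_prop))
      (ae_of_all _ fun X => ?_)
    rw [Real.norm_of_nonneg (by positivity)]
    exact mul_le_one₀ (exp_window_le_one hs _) (Real.exp_pos _).le (exp_window_le_one hs _)
  simp_rw [hsq]
  rw [integral_const_mul,
    integral_finsetSum _ fun ρ _ => integrable_finsetSum _ fun ρ' _ => hint ρ ρ']
  simp_rw [fun ρ => integral_finsetSum Finset.univ fun ρ' _ => hint ρ ρ',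
    fun ρ ρ' : ι → Bool => integral_smooth_pair (fun i => sg (ρ i)) (fun i => sg (ρ' i))
      (fun i => sg_sq _) (fun i => sg_sq _) hs t]
  have hterm : ∀ ρ ρ' : ι → Bool,
      smoothMean ((N + ∑ i, sg (ρ i) * sg (ρ' i)) / 2) (s / 2) t *
        smoothMean ((N - ∑ i, sg (ρ i) * sg (ρ' i)) / 2) (s / 2) 0 ≤
      g ^ 2 * (A + B * (if κ * N < |∑ i, sg (ρ i) * sg (ρ' i)| then (1 : ℝ) else 0)) := by
    intro ρ ρ'
    split_ifs with h
    · refine (smoothMean_pair_le_far hs hN0 (abs_overlap_le ρ ρ') hK).trans ?_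
      rw [mul_one]
      gcongr
      exact le_add_of_nonneg_left hA0
    · refine (smoothMean_pair_le_near hs hN0 hκ0 hκ1 (not_lt.1 h) hK).trans ?_
      rw [mul_zero, add_zero]
  have hrow : ∀ ρ : ι → Bool, ∑ ρ' : ι → Bool,
      smoothMean ((N + ∑ i, sg (ρ i) * sg (ρ' i)) / 2) (s / 2) t *
        smoothMean ((N - ∑ i, sg (ρ i) * sg (ρ' i)) / 2) (s / 2) 0 ≤
      2 ^ Fintype.card ι * (g ^ 2 * (A + B * (2 * Real.exp (-(κ ^ 2 * N / 2))))) := by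
    intro ρ
    refine (Finset.sum_le_sum fun ρ' _ => hterm ρ ρ').trans ?_
    rw [← Finset.mul_sum, Finset.sum_add_distrib, ← Finset.mul_sum]
    have := card_overlap_le ρ hκ0
    rw [← hN] at this
    calc _ ≤ g ^ 2 * (∑ ρ' : ι → Bool, A +
          B * (2 ^ Fintype.card ι * (2 * Real.exp (-(κ ^ 2 * N / 2))))) := by gcongr
      _ = _ := by simp; ring
  calc _ ≤ ((2 ^ Fintype.card ι)⁻¹ ^ 2) * ∑ ρ : ι → Bool,
        2 ^ Fintype.card ι * (g ^ 2 * (A + B * (2 * Real.exp (-(κ ^ 2 * N / 2))))) := by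
        gcongr with ρ _; exact hrow ρ
    _ = _ := by
      simp
      field_simp

/-- Chebyshev's inequality for `smoothCount`. -/
lemma measure_smoothCount_le {s : ℝ} (hs : 0 < s) {t κ K : ℝ} (hκ0 : 0 ≤ κ) (hκ1 : κ < 1)
    (hK : t ^ 2 ≤ K * (Fintype.card ι + s)) :
    (Measure.pi fun _ : ι => gaussianReal 0 1)
      {X | smoothCount s t X ≤ smoothMean (Fintype.card ι) s t / 2} ≤
      ENNReal.ofReal (4 * (Real.exp (K * κ) / (1 - κ) - 1 +
        Real.sqrt ((Fintype.card ι + s) / s) * Real.exp K *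
          (2 * Real.exp (-(κ ^ 2 * Fintype.card ι / 2))))) := by
  set μ := (Measure.pi fun _ : ι => gaussianReal 0 1) with hμ
  set g := smoothMean (Fintype.card ι) s t with hg
  have hg0 : 0 < g := smoothMean_pos (by positivity) hs t
  have hmem : MemLp (smoothCount s t) 2 μ := by
    refine MemLp.of_bound (measurable_smoothCount s t).aestronglyMeasurable 1
      (ae_of_all _ fun X => ?_)
    rw [Real.norm_of_nonneg (smoothCount_nonneg s t X)]
    exact smoothCount_le_of_forall X fun ρ => exp_window_le_one hs _
  have hmean : μ[smoothCount s t] = g := integral_smoothCount hs t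
  have hcheb := meas_ge_le_variance_div_sq hmem (half_pos hg0)
  refine (measure_mono ?_).trans (hcheb.trans (ENNReal.ofReal_le_ofReal ?_))
  · intro X hX
    have hX' : smoothCount s t X ≤ g / 2 := hX
    have : g / 2 ≤ |smoothCount s t X - μ[smoothCount s t]| := by
      rw [hmean, abs_sub_comm]
      exact le_trans (by linarith) (le_abs_self _)
    exact this
  · rw [variance_eq_sub hmem, hmean, div_le_iff₀ (by positivity)]
    have := integral_smoothCount_sq_le (ι := ι) hs hκ0 hκ1 hK
    rw [← hg, ← hμ] at this
    have h2 : ∫ X, (smoothCount s t ^ 2) X ∂μ = ∫ X, smoothCount s t X ^ 2 ∂μ := rfl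
    rw [h2]
    nlinarith

end secondMoment

/-! ### Freezing the signs outside a block -/

lemma gaussianReal_tail_le (v : NNReal) {c : ℝ} (hc : 0 < c) :
    gaussianReal 0 v {y | c < y ^ 2} ≤ ENNReal.ofReal (v / c) := by
  have h := meas_ge_le_variance_div_sq (μ := gaussianReal 0 v) (X := id)
    (memLp_id_gaussianReal' 2 (by simp)) (Real.sqrt_pos.2 hc)
  rw [variance_id_gaussianReal, Real.sq_sqrt hc.le] at h
  refine (measure_mono ?_).trans h
  intro y hy
  have hy' : c < y ^ 2 := hy
  simp only [Set.mem_ofPred_eq, id, integral_id_gaussianReal, sub_zero]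
  rw [← Real.sqrt_sq_eq_abs]
  exact Real.sqrt_le_sqrt hy'.le

/-- With the signs outside the block `p` frozen at `u`, the probability that no choice of signs on
the block brings the total within `Δ` of `0`. The frozen part is minus the target `t`, and is
independent of the block. -/
lemma measure_block_fail_le {ι : Type*} [Fintype ι] [DecidableEq ι] (p : ι → Prop)
    [DecidablePred p] (u : ι → ℝ) (hu : ∀ i, u i ^ 2 = 1) {s κ K Δ : ℝ} (hs : 0 < s)
    (hκ0 : 0 ≤ κ) (hκ1 : κ < 1) (hK : 0 < K) (hΔ : 0 < Δ)
    (hgap : Real.exp (-Δ ^ 2 / (2 * s)) ≤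
      Real.sqrt (s / (Fintype.card {i // p i} + s)) * Real.exp (-K / 2) / 2) :
    (Measure.pi fun _ : ι => gaussianReal 0 1)
      {X | ∀ ρ : {i // p i} → Bool,
        Δ < |∑ i, sg (ρ i) * X i + ∑ i : {i // ¬ p i}, u i * X i|} ≤
      ENNReal.ofReal (4 * (Real.exp (K * κ) / (1 - κ) - 1 +
        Real.sqrt ((Fintype.card {i // p i} + s) / s) * Real.exp K *
          (2 * Real.exp (-(κ ^ 2 * Fintype.card {i // p i} / 2))))) +
      ENNReal.ofReal (Fintype.card ι / (K * (Fintype.card {i // p i} + s))) := by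
  set N : ℝ := (Fintype.card {i // p i} : ℝ) with hN
  set r := ENNReal.ofReal (4 * (Real.exp (K * κ) / (1 - κ) - 1 +
        Real.sqrt ((N + s) / s) * Real.exp K * (2 * Real.exp (-(κ ^ 2 * N / 2))))) with hr
  set μ₁ := Measure.pi fun _ : {i // p i} => gaussianReal 0 1 with hμ₁
  set μ₂ := Measure.pi fun _ : {i // ¬ p i} => gaussianReal 0 1 with hμ₂
  have hNs : 0 < N + s := by positivity
  let T : ({i // ¬ p i} → ℝ) → ℝ := fun y => ∑ i : {i // ¬ p i}, u i * y i
  have hT : Measurable T := by fun_prop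
  let Bad : Set (({i // p i} → ℝ) × ({i // ¬ p i} → ℝ)) :=
    {z | ∀ ρ : {i // p i} → Bool, Δ < |∑ i, sg (ρ i) * z.1 i + T z.2|}
  have hBad : MeasurableSet Bad := by
    have : Bad = ⋂ ρ : {i // p i} → Bool, {z | Δ < |∑ i, sg (ρ i) * z.1 i + T z.2|} := by
      ext z; simp [Bad]
    rw [this]
    refine MeasurableSet.iInter fun ρ => measurableSet_lt measurable_const ?_
    fun_prop
  have hmp := measurePreserving_piEquivPiSubtypeProd (fun _ : ι => gaussianReal 0 1) p
  have h1 : (Measure.pi fun _ : ι => gaussianReal 0 1)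
      {X | ∀ ρ : {i // p i} → Bool,
        Δ < |∑ i, sg (ρ i) * X i + ∑ i : {i // ¬ p i}, u i * X i|} = (μ₁.prod μ₂) Bad := by
    rw [← hmp.measure_preimage hBad.nullMeasurableSet]
    rfl
  rw [h1, Measure.prod_apply_symm hBad]
  -- for a target of moderate size, Chebyshev's inequality on the block applies
  have hgood : ∀ y, ¬ (K * (N + s) < T y ^ 2) → μ₁ ((fun x => (x, y)) ⁻¹' Bad) ≤ r := by
    intro y hy
    have ht : (-T y) ^ 2 ≤ K * (N + s) := by rw [neg_sq]; exact not_lt.1 hy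
    refine (measure_mono ?_).trans (measure_smoothCount_le hs hκ0 hκ1 ht)
    intro x hx
    have hx' : ∀ ρ : {i // p i} → Bool, Δ < |∑ i, sg (ρ i) * x i + T y| := hx
    have hb : smoothCount s (-T y) x ≤ Real.exp (-Δ ^ 2 / (2 * s)) := by
      refine smoothCount_le_of_forall x fun ρ => Real.exp_le_exp.2 ?_
      rw [sub_neg_eq_add]
      have : Δ ^ 2 ≤ (∑ i, sg (ρ i) * x i + T y) ^ 2 := by
        rw [← sq_abs (∑ i, sg (ρ i) * x i + T y)]
        have := hx' ρ
        gcongr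
      gcongr
    have hm : Real.sqrt (s / (N + s)) * Real.exp (-K / 2) ≤ smoothMean N s (-T y) := by
      unfold smoothMean
      refine mul_le_mul_of_nonneg_left (Real.exp_le_exp.2 ?_) (Real.sqrt_nonneg _)
      rw [neg_div, neg_div, neg_le_neg_iff, div_le_div_iff₀ (by positivity) (by positivity)]
      linarith
    have : smoothCount s (-T y) x ≤ smoothMean N s (-T y) / 2 := by linarith
    exact this
  have hset : MeasurableSet {y | K * (N + s) < T y ^ 2} :=
    measurableSet_lt measurable_const (hT.pow_const 2)
  have htail : μ₂ {y | K * (N + s) < T y ^ 2} ≤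
      ENNReal.ofReal (Fintype.card ι / (K * (N + s))) := by
    have hmap := map_signed_sum (Finset.univ : Finset {i // ¬ p i}) (fun i => u i) (fun i => hu i)
    have h2 := gaussianReal_tail_le (Finset.univ : Finset {i // ¬ p i}).card
      (c := K * (N + s)) (by positivity)
    rw [← hmap, Measure.map_apply (by fun_prop)
      (measurableSet_lt measurable_const (by fun_prop))] at h2
    refine le_trans h2 (ENNReal.ofReal_le_ofReal ?_)
    gcongr
    rw [Finset.card_univ, NNReal.coe_natCast]
    exact_mod_cast Fintype.card_subtype_le _
  calc ∫⁻ y, μ₁ ((fun x => (x, y)) ⁻¹' Bad) ∂μ₂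
      ≤ ∫⁻ y, (r + {y | K * (N + s) < T y ^ 2}.indicator 1 y) ∂μ₂ := by
        refine lintegral_mono fun y => ?_
        by_cases hy : K * (N + s) < T y ^ 2
        · have hy' : y ∈ {y | K * (N + s) < T y ^ 2} := hy
          have : {y | K * (N + s) < T y ^ 2}.indicator
              (1 : ({i // ¬ p i} → ℝ) → ENNReal) y = 1 := Set.indicator_of_mem hy' _
          rw [this]
          exact prob_le_one.trans le_add_self
        · exact (hgood y hy).trans le_self_add
    _ = r + μ₂ {y | K * (N + s) < T y ^ 2} := by
        rw [lintegral_add_left measurable_const, lintegral_indicator_one hset]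
        simp
    _ ≤ _ := by gcongr

/-! ### Asymptotics of the failure probability -/

/-- `√(2(n+1)) 2^{f(n)}`, which bounds `√((N + s) / s)`, is subexponential. -/
lemma tendsto_window_ratio {f : ℕ → ℝ}
    (hfinf : Tendsto f atTop atTop) (hfo : Tendsto (fun n : ℕ => f n / n) atTop (nhds 0))
    {c : ℝ} (hc : 0 < c) :
    Tendsto (fun n : ℕ => Real.sqrt (2 * (n + 1)) / (2 : ℝ) ^ (-(f n)) * Real.exp (-(c * n)))
      atTop (nhds 0) := by
  have h1 : ∀ᶠ n : ℕ in atTop, f n / n < c / 2 := hfo.eventually_lt_const (by positivity)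
  have hx : Tendsto (fun n : ℕ => c / 2 * (n : ℝ)) atTop atTop :=
    tendsto_natCast_atTop_atTop.const_mul_atTop (by positivity)
  have h2 : Tendsto (fun n : ℕ => 2 * (2 / c * ((c / 2 * (n : ℝ)) ^ 1 * Real.exp (-(c / 2 * n)))
      + Real.exp (-(c / 2 * n)))) atTop (nhds (2 * (2 / c * 0 + 0))) := by
    refine Tendsto.const_mul _ (Tendsto.add (Tendsto.const_mul _ ?_) ?_)
    · exact (Real.tendsto_pow_mul_exp_neg_atTop_nhds_zero 1).comp hx
    · exact Real.tendsto_exp_neg_atTop_nhds_zero.comp hx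
  simp only [mul_zero, add_zero] at h2
  refine squeeze_zero' (Eventually.of_forall fun n => by positivity) ?_ h2
  filter_upwards [h1, eventually_gt_atTop 0, hfinf.eventually_ge_atTop 0] with n hn hn0 hf0
  have hn0' : (0 : ℝ) < n := by exact_mod_cast hn0
  have hf : f n ≤ c / 2 * n := by rw [div_lt_iff₀ hn0'] at hn; exact hn.le
  have e1 : ((2 : ℝ) ^ (-(f n)))⁻¹ ≤ Real.exp (c / 2 * n) := by
    rw [Real.rpow_neg (by norm_num), inv_inv, Real.rpow_def_of_pos (by norm_num)]
    apply Real.exp_le_exp.2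
    have : Real.log 2 ≤ 1 := by linarith [Real.log_two_lt_d9]
    nlinarith
  have e2 : Real.sqrt (2 * ((n : ℝ) + 1)) ≤ 2 * (n + 1) := by
    rw [Real.sqrt_le_left (by positivity)]
    nlinarith
  calc Real.sqrt (2 * (n + 1)) / (2 : ℝ) ^ (-(f n)) * Real.exp (-(c * n))
      ≤ (2 * (n + 1)) * Real.exp (c / 2 * n) * Real.exp (-(c * n)) := by
        rw [div_eq_mul_inv]; gcongr
    _ = (2 * (n + 1)) * Real.exp (-(c / 2 * n)) := by
        rw [mul_assoc, ← Real.exp_add]; congr 2; ring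
    _ = _ := by field_simp

/-- With the signs outside the first `⌈a n⌉` coordinates frozen arbitrarily, the failure probability
tends to `0`, uniformly in the frozen signs. -/
lemma eventually_block_fail_le {f : ℕ → ℝ}
    (hfinf : Tendsto f atTop atTop) (hfo : Tendsto (fun n : ℕ => f n / n) atTop (nhds 0))
    {a : ℝ} (ha0 : 0 < a) (ha1 : a ≤ 1) {δ : ℝ} (hδ : 0 < δ) :
    ∀ᶠ n : ℕ in atTop, ∀ u : Fin n → ℝ, isCube u →
      stdGaussian n {X | ∀ σ : Fin n → ℝ, isCube σ →
        (∀ k : Fin n, ¬ (k : ℕ) < ⌈a * n⌉₊ → σ k = u k) →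
        (2 : ℝ) ^ (-(f n)) < |ip σ X| / Real.sqrt n} ≤ ENNReal.ofReal δ := by
  -- `K` makes the tail of the frozen part at most `δ / 2`
  set K : ℝ := 2 / (a * δ) with hKdef
  have hK : 0 < K := by positivity
  obtain ⟨κ, hκ0, hκ1, hκ⟩ : ∃ κ : ℝ, 0 < κ ∧ κ < 1 ∧
      4 * (Real.exp (K * κ) / (1 - κ) - 1) < δ / 4 := by
    have hcont : ContinuousAt (fun κ : ℝ => 4 * (Real.exp (K * κ) / (1 - κ) - 1)) 0 := by
      have : (1 : ℝ) - 0 ≠ 0 := by norm_num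
      fun_prop (disch := assumption)
    have h1 : ∀ᶠ κ in nhds (0 : ℝ), 4 * (Real.exp (K * κ) / (1 - κ) - 1) < δ / 4 := by
      refine hcont.eventually_lt_const ?_
      simp; positivity
    have h2 : ∀ᶠ κ in nhdsWithin (0 : ℝ) (Set.Ioi 0), 0 < κ ∧ κ < 1 ∧
        4 * (Real.exp (K * κ) / (1 - κ) - 1) < δ / 4 := by
      filter_upwards [self_mem_nhdsWithin, nhdsWithin_le_nhds h1,
        nhdsWithin_le_nhds (eventually_lt_nhds (show (0 : ℝ) < 1 by norm_num))] with κ h3 h4 h5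
      exact ⟨h3, h5, h4⟩
    exact h2.exists
  have hW1 := (tendsto_window_ratio hfinf hfo (c := 1) one_pos).eventually_lt_const
    (show 0 < Real.exp (-K / 2) / 2 by positivity)
  have hW2 := (tendsto_window_ratio hfinf hfo (c := κ ^ 2 * a / 2) (by positivity)).eventually_lt_const
    (show 0 < δ / (32 * Real.exp K) by positivity)
  filter_upwards [hW1, hW2, eventually_gt_atTop 0, hfinf.eventually_ge_atTop 0]
    with n hW1 hW2 hn0 hf0 u hu
  have hn0' : (0 : ℝ) < n := by exact_mod_cast hn0
  set b : ℝ := (2 : ℝ) ^ (-(f n)) with hb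
  have hb0 : 0 < b := by positivity
  have hb1 : b ≤ 1 := Real.rpow_le_one_of_one_le_of_nonpos (by norm_num) (by linarith)
  set s : ℝ := b ^ 2 / 2 with hs
  have hs0 : 0 < s := by positivity
  have hs1 : s ≤ 1 := by rw [hs]; nlinarith
  set p : Fin n → Prop := fun k => (k : ℕ) < ⌈a * n⌉₊ with hp
  set N : ℝ := (Fintype.card {k // p k} : ℝ) with hN
  have hceil : ⌈a * n⌉₊ ≤ n := Nat.ceil_le.2 (by nlinarith)
  have hcard : Fintype.card {k // p k} = ⌈a * n⌉₊ := by
    rw [Fintype.card_subtype]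
    simp [hp, Fin.card_filter_val_lt, hceil]
  have hNge : a * n ≤ N := by rw [hN, hcard]; exact Nat.le_ceil _
  have hNle : N ≤ n := by rw [hN, hcard]; exact_mod_cast hceil
  have hNs : 0 < N + s := by positivity
  have hW : Real.sqrt ((N + s) / s) ≤ Real.sqrt (2 * (n + 1)) / b := by
    rw [Real.sqrt_le_left (by positivity), div_pow, Real.sq_sqrt (by positivity), hs,
      div_le_div_iff₀ (by positivity) (by positivity)]
    rw [hs] at hs1
    nlinarith [mul_le_mul_of_nonneg_right (add_le_add hNle hs1) (sq_nonneg b)]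
  have hu2 : ∀ i, u i ^ 2 = 1 := fun i => by rcases hu i with h | h <;> simp [h]
  have hgap : Real.exp (-(Real.sqrt n * b) ^ 2 / (2 * s)) ≤
      Real.sqrt (s / (N + s)) * Real.exp (-K / 2) / 2 := by
    have e1 : -(Real.sqrt n * b) ^ 2 / (2 * s) = -(1 * n) := by
      rw [mul_pow, Real.sq_sqrt hn0'.le, hs]; field_simp
    have e2 : Real.sqrt (s / (N + s)) = (Real.sqrt ((N + s) / s))⁻¹ := by
      rw [← Real.sqrt_inv, inv_div]
    have hS : 0 < Real.sqrt ((N + s) / s) := by positivity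
    rw [e1, e2, mul_div_assoc, inv_mul_eq_div, le_div_iff₀ hS, mul_comm]
    exact (mul_le_mul_of_nonneg_right hW (Real.exp_pos _).le).trans hW1.le
  have hmain := measure_block_fail_le p u hu2 hs0 hκ0.le hκ1 hK
    (Δ := Real.sqrt n * b) (by positivity) hgap
  have hsub : {X : Fin n → ℝ | ∀ σ : Fin n → ℝ, isCube σ →
        (∀ k : Fin n, ¬ (k : ℕ) < ⌈a * n⌉₊ → σ k = u k) →
        b < |ip σ X| / Real.sqrt n} ⊆ {X | ∀ ρ : {i // p i} → Bool,
        Real.sqrt n * b < |∑ i, sg (ρ i) * X i + ∑ i : {i // ¬ p i}, u i * X i|} := by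
    intro X hX ρ
    let σ : Fin n → ℝ := fun k => if h : p k then sg (ρ ⟨k, h⟩) else u k
    have hσ1 : isCube σ := by
      intro k
      by_cases h : p k
      · simp only [σ, h, dif_pos]
        cases ρ ⟨k, h⟩ <;> simp [sg]
      · simp only [σ, h, dif_neg, not_false_eq_true]; exact hu k
    have hσ2 : ∀ k : Fin n, ¬ (k : ℕ) < ⌈a * n⌉₊ → σ k = u k := by
      intro k hk
      have h : ¬ p k := hk
      simp only [σ, h, dif_neg, not_false_eq_true]
    have h3 := hX σ hσ1 hσ2
    rw [lt_div_iff₀ (Real.sqrt_pos.2 hn0'), mul_comm] at h3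
    have h4 : ip σ X = ∑ i : {i // p i}, sg (ρ i) * X i + ∑ i : {i // ¬ p i}, u i * X i := by
      rw [ip, ← Fintype.sum_subtype_add_sum_subtype p]
      congr 1
      · refine Finset.sum_congr rfl fun i _ => ?_
        simp only [σ, i.2, dif_pos]
      · refine Finset.sum_congr rfl fun i _ => ?_
        simp only [σ, i.2, dif_neg, not_false_eq_true]
    rwa [h4] at h3
  refine (measure_mono hsub).trans (hmain.trans ?_)
  rw [← hN]
  have hA : 4 * (Real.exp (K * κ) / (1 - κ) - 1 +
      Real.sqrt ((N + s) / s) * Real.exp K * (2 * Real.exp (-(κ ^ 2 * N / 2)))) ≤ δ / 2 := by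
    have e1 : Real.exp (-(κ ^ 2 * N / 2)) ≤ Real.exp (-(κ ^ 2 * a / 2 * n)) := by
      apply Real.exp_le_exp.2
      nlinarith [mul_le_mul_of_nonneg_left hNge (sq_nonneg κ)]
    have e2 : Real.sqrt ((N + s) / s) * Real.exp (-(κ ^ 2 * N / 2)) ≤ δ / (32 * Real.exp K) :=
      (mul_le_mul hW e1 (Real.exp_pos _).le (by positivity)).trans hW2.le
    rw [le_div_iff₀ (by positivity)] at e2
    linarith
  have hB : (Fintype.card (Fin n) : ℝ) / (K * (N + s)) ≤ δ / 2 := by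
    rw [Fintype.card_fin, div_le_iff₀ (by positivity), hKdef]
    have : δ / 2 * (2 / (a * δ) * (N + s)) = (N + s) / a := by field_simp
    rw [this, le_div_iff₀ ha0]
    linarith
  calc _ ≤ ENNReal.ofReal (δ / 2) + ENNReal.ofReal (δ / 2) :=
        add_le_add (ENNReal.ofReal_le_ofReal hA) (ENNReal.ofReal_le_ofReal hB)
    _ = ENNReal.ofReal δ := by rw [← ENNReal.ofReal_add (by positivity) (by positivity)]; simp

/-! ### Templates with prescribed overlaps -/

/-- The `i`-th Rademacher function on `ℕ`: the sign given by the `i`-th binary digit. -/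
def rad (i k : ℕ) : ℝ := if k.testBit i then -1 else 1

lemma abs_rad (i k : ℕ) : |rad i k| = 1 := by unfold rad; split_ifs <;> simp

lemma rad_cases (i k : ℕ) : rad i k = 1 ∨ rad i k = -1 := by unfold rad; split_ifs <;> simp

lemma rad_add_period {m i : ℕ} (hi : i < m) (k : ℕ) : rad i (2 ^ m + k) = rad i k := by
  unfold rad; rw [Nat.testBit_two_pow_add_gt hi]

/-- Orthogonality over a period: flipping the `i`-th digit changes the sign of the summand. -/
lemma sum_rad_mul_rad_period {m i j : ℕ} (hi : i < m) (hij : i ≠ j) :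
    ∑ k ∈ Finset.range (2 ^ m), rad i k * rad j k = 0 := by
  have hflip_i : ∀ k, rad i (k ^^^ 2 ^ i) = - rad i k := by
    intro k
    unfold rad
    rw [Nat.testBit_xor, Nat.testBit_two_pow_self]
    cases k.testBit i <;> simp
  have hflip_j : ∀ k, rad j (k ^^^ 2 ^ i) = rad j k := by
    intro k
    unfold rad
    rw [Nat.testBit_xor, Nat.testBit_two_pow_of_ne hij]
    simp
  have hmem : ∀ k ∈ Finset.range (2 ^ m), k ^^^ 2 ^ i ∈ Finset.range (2 ^ m) := by
    intro k hk
    rw [Finset.mem_range] at hk ⊢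
    exact Nat.xor_lt_two_pow hk (Nat.pow_lt_pow_right (by norm_num) hi)
  have h : ∑ k ∈ Finset.range (2 ^ m), rad i k * rad j k =
      ∑ k ∈ Finset.range (2 ^ m), -(rad i k * rad j k) := by
    refine Finset.sum_nbij' (fun k => k ^^^ 2 ^ i) (fun k => k ^^^ 2 ^ i) hmem hmem ?_ ?_ ?_
    · intro k _; simp
    · intro k _; simp
    · intro k _; simp only [hflip_i, hflip_j]; ring
  rw [Finset.sum_neg_distrib] at h
  linarith

lemma abs_sum_rad_le {m i j : ℕ} (hi : i < m) (hj : j < m) (hij : i ≠ j) (n : ℕ) :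
    |∑ k ∈ Finset.range n, rad i k * rad j k| ≤ (2 : ℝ) ^ m := by
  induction n using Nat.strong_induction_on with
  | _ n ih =>
    rcases lt_or_ge n (2 ^ m) with hn | hn
    · refine (Finset.abs_sum_le_sum_abs _ _).trans ?_
      simp only [abs_mul, abs_rad, mul_one, Finset.sum_const, Finset.card_range, nsmul_eq_mul]
      exact_mod_cast hn.le
    · obtain ⟨n', rfl⟩ := Nat.exists_eq_add_of_le hn
      rw [Finset.sum_range_add, sum_rad_mul_rad_period hi hij, zero_add]
      simp only [rad_add_period hi, rad_add_period hj]
      exact ih n' (by have := Nat.two_pow_pos m; omega)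

/-- Template vectors: they agree on the first `B` coordinates and are Rademacher functions
elsewhere, so that their pairwise inner products are `B + O(1)`. -/
def template (B n i : ℕ) (k : Fin n) : ℝ := if (k : ℕ) < B then 1 else rad i k

lemma isCube_template (B n i : ℕ) : isCube (template B n i) := by
  intro k
  unfold template
  split_ifs
  · simp
  · exact rad_cases i k

lemma abs_ip_template_sub_le {m i j B n : ℕ} (hi : i < m) (hj : j < m) (hij : i ≠ j) (hB : B ≤ n) :
    |ip (template B n i) (template B n j) - B| ≤ 2 * 2 ^ m := by
  have h1 : ip (template B n i) (template B n j) =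
      ∑ k ∈ Finset.range n, (if k < B then 1 else rad i k * rad j k) := by
    rw [ip, ← Fin.sum_univ_eq_sum_range (fun k => if k < B then 1 else rad i k * rad j k)]
    refine Finset.sum_congr rfl fun k _ => ?_
    unfold template
    split_ifs <;> simp
  obtain ⟨c, rfl⟩ := Nat.exists_eq_add_of_le hB
  have h2 : ip (template B (B + c) i) (template B (B + c) j) - B =
      ∑ k ∈ Finset.range (B + c), rad i k * rad j k - ∑ k ∈ Finset.range B, rad i k * rad j k := by
    rw [h1, Finset.sum_range_add, Finset.sum_range_add]
    have e1 : ∑ k ∈ Finset.range B, (if k < B then 1 else rad i k * rad j k) = (B : ℝ) := by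
      rw [Finset.sum_congr rfl (g := fun _ => (1 : ℝ))]
      · simp
      · intro k hk; rw [if_pos (Finset.mem_range.1 hk)]
    rw [e1]
    simp
  rw [h2]
  have h3 := abs_sum_rad_le hi hj hij (B + c)
  have h4 := abs_sum_rad_le hi hj hij B
  rw [abs_le] at *
  constructor <;> linarith [h3.1, h3.2, h4.1, h4.2]

/-- Changing the first `N` signs of two cube points moves their inner product by at most `2 N`. -/
lemma abs_ip_sub_ip_le {n N : ℕ} {σ σ' u u' : Fin n → ℝ} (hσ : isCube σ) (hσ' : isCube σ')
    (hu : isCube u) (hu' : isCube u') (h : ∀ k : Fin n, ¬ (k : ℕ) < N → σ k = u k)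
    (h' : ∀ k : Fin n, ¬ (k : ℕ) < N → σ' k = u' k) :
    |ip σ σ' - ip u u'| ≤ 2 * N := by
  have h1 : ∀ k : Fin n, |σ k * σ' k - u k * u' k| ≤ if (k : ℕ) < N then 2 else 0 := by
    intro k
    split_ifs with hk
    · rcases hσ k with h1 | h1 <;> rcases hσ' k with h2 | h2 <;> rcases hu k with h3 | h3 <;>
        rcases hu' k with h4 | h4 <;> rw [h1, h2, h3, h4] <;> norm_num
    · rw [h k hk, h' k hk]; simp
  rw [ip, ip, ← Finset.sum_sub_distrib]
  refine (Finset.abs_sum_le_sum_abs _ _).trans ((Finset.sum_le_sum fun k _ => h1 k).trans ?_)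
  rw [← Finset.sum_filter, Finset.sum_const, nsmul_eq_mul, mul_comm]
  gcongr
  rw [Fin.card_filter_val_lt]
  exact min_le_right _ _

/-! ### Union bound over templates -/

theorem ogp_absent (η : ℝ) (hη : 0 < η) (m : ℕ) (hm : 0 < m)
    (f : ℕ → ℝ) (hfpos : ∀ n, 0 < f n)
    (hfinf : Tendsto f atTop atTop)
    (hfo : Tendsto (fun n : ℕ => f n / n) atTop (nhds 0)) :
    Tendsto (fun n : ℕ =>
      stdGaussian n {X : Fin n → ℝ | ∀ β ∈ Set.Icc (0 : ℝ) 1,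
        ∃ σ : Fin m → Fin n → ℝ, (∀ i, isCube (σ i)) ∧
          (∀ i j : Fin m, i < j →
            β - η ≤ |ip (σ i) (σ j)| / n ∧ |ip (σ i) (σ j)| / n ≤ β + η) ∧
          ∀ i : Fin m, |ip (σ i) X| / Real.sqrt n ≤ (2 : ℝ) ^ (-(f n))})
      atTop (nhds 1) := by
  have hprob : ∀ n, IsProbabilityMeasure (stdGaussian n) := fun n => by
    unfold _root_.stdGaussian; infer_instance
  -- block density, mesh of the net in `β`
  set a : ℝ := min (η / 16) 1 with ha
  have ha0 : 0 < a := by positivity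
  have ha1 : a ≤ 1 := min_le_right _ _
  have haη : a ≤ η / 16 := min_le_left _ _
  obtain ⟨Q, hQ⟩ := exists_nat_gt (4 / η)
  have hQ0 : (0 : ℝ) < Q := lt_trans (by positivity) hQ
  have hQη : 1 / (Q : ℝ) ≤ η / 4 := by
    rw [div_lt_iff₀ hη] at hQ
    rw [div_le_iff₀ hQ0]; linarith
  refine tendsto_order.2 ⟨fun c hc => ?_, fun c hc =>
    Eventually.of_forall fun n => lt_of_le_of_lt prob_le_one hc⟩
  -- total failure probability to aim for
  obtain ⟨ε, hε0, hε⟩ : ∃ ε : ℝ, 0 < ε ∧ c + ENNReal.ofReal ε < 1 := by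
    obtain ⟨e, he0, he⟩ := ENNReal.lt_iff_exists_add_pos_lt.1 hc
    exact ⟨e, he0, by simpa using he⟩
  set δ : ℝ := ε / ((Q + 1) * m) with hδ
  have hm' : (0 : ℝ) < m := by exact_mod_cast hm
  have hδ0 : 0 < δ := by positivity
  obtain ⟨n₀, hn₀⟩ := exists_nat_gt (2 * (2 * 2 ^ m + 3) / η)
  filter_upwards [eventually_block_fail_le hfinf hfo ha0 ha1 hδ0, eventually_gt_atTop 0,
    eventually_ge_atTop n₀] with n hfail hn0 hnn
  have hn0' : (0 : ℝ) < n := by exact_mod_cast hn0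
  have hnbig : 2 * 2 ^ m + 3 ≤ η / 2 * n := by
    have : (n₀ : ℝ) ≤ n := by exact_mod_cast hnn
    have h2 := hn₀.trans_le this
    rw [div_lt_iff₀ hη] at h2
    linarith
  set S : Set (Fin n → ℝ) := {X : Fin n → ℝ | ∀ β ∈ Set.Icc (0 : ℝ) 1,
        ∃ σ : Fin m → Fin n → ℝ, (∀ i, isCube (σ i)) ∧
          (∀ i j : Fin m, i < j →
            β - η ≤ |ip (σ i) (σ j)| / n ∧ |ip (σ i) (σ j)| / n ≤ β + η) ∧
          ∀ i : Fin m, |ip (σ i) X| / Real.sqrt n ≤ (2 : ℝ) ^ (-(f n))} with hS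
  let bad : ℕ × Fin m → Set (Fin n → ℝ) := fun z =>
    {X | ∀ σ : Fin n → ℝ, isCube σ →
        (∀ k : Fin n, ¬ (k : ℕ) < ⌈a * n⌉₊ → σ k = template (z.1 * n / Q) n z.2 k) →
        (2 : ℝ) ^ (-(f n)) < |ip σ X| / Real.sqrt n}
  have hcover : Sᶜ ⊆ ⋃ z ∈ (Finset.range (Q + 1) ×ˢ (Finset.univ : Finset (Fin m))), bad z := by
    rw [Set.compl_subset_comm]
    intro X hX β hβ
    set q : ℕ := ⌊β * Q⌋₊ with hq
    have hqQ : q ≤ Q := by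
      refine Nat.floor_le_of_le ?_
      nlinarith [hβ.2]
    have hX' : ∀ i : Fin m, ∃ σ : Fin n → ℝ, isCube σ ∧
        (∀ k : Fin n, ¬ (k : ℕ) < ⌈a * n⌉₊ → σ k = template (q * n / Q) n i k) ∧
        |ip σ X| / Real.sqrt n ≤ (2 : ℝ) ^ (-(f n)) := by
      intro i
      by_contra hcon
      apply hX
      simp only [Set.mem_iUnion]
      exact ⟨(q, i), by simp; omega, fun σ h1 h2 =>
        not_le.1 fun h3 => hcon ⟨σ, h1, h2, h3⟩⟩
    choose σ hσ1 hσ2 hσ3 using hX'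
    refine ⟨σ, hσ1, fun i j hij => ?_, hσ3⟩
    set B : ℕ := q * n / Q with hB
    have hBn : B ≤ n := by
      refine Nat.div_le_of_le_mul ?_
      exact Nat.mul_le_mul_right _ hqQ
    have hne : (i : ℕ) ≠ j := fun h => absurd (Fin.ext h) hij.ne
    have h1 := abs_ip_sub_ip_le (hσ1 i) (hσ1 j) (isCube_template B n i) (isCube_template B n j)
      (hσ2 i) (hσ2 j)
    have h2 := abs_ip_template_sub_le (n := n) i.2 j.2 hne hBn
    have h3 : (⌈a * n⌉₊ : ℝ) ≤ η / 16 * n + 1 :=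
      (Nat.ceil_lt_add_one (by positivity)).le.trans (by gcongr)
    have hq1 : (q : ℝ) ≤ β * Q := Nat.floor_le (by have := hβ.1; positivity)
    have hq2 : β * Q < q + 1 := Nat.lt_floor_add_one _
    have hB1 : (B : ℝ) ≤ β * n := by
      have e : (B : ℝ) ≤ q * n / Q := by
        have := @Nat.cast_div_le ℝ _ _ _ (q * n) Q
        push_cast at this; exact this
      refine e.trans ?_
      rw [div_le_iff₀ hQ0]
      nlinarith
    have hB2 : β * n - η / 4 * n - 1 ≤ B := by
      have e : (q * n / Q : ℝ) < B + 1 := by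
        rw [div_lt_iff₀ hQ0]
        have := Nat.lt_div_mul_add (a := q * n) (b := Q) (by exact_mod_cast hQ0)
        have e' : ((q * n : ℕ) : ℝ) < ((q * n / Q * Q + Q : ℕ) : ℝ) := by exact_mod_cast this
        push_cast at e'
        rw [← hB] at e'
        linarith
      have e2 : β * n - 1 / Q * n ≤ q * n / Q := by
        rw [le_div_iff₀ hQ0]
        have : (β * n - 1 / Q * n) * Q = (β * Q - 1) * n := by field_simp
        rw [this]
        gcongr
        linarith
      have e3 : 1 / (Q : ℝ) * n ≤ η / 4 * n := by gcongr
      linarith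
    have hclose : |ip (σ i) (σ j) - β * n| ≤ η * n := by
      rw [abs_le] at *
      constructor <;> nlinarith [h1.1, h1.2, h2.1, h2.2]
    have hβn : 0 ≤ β * n := mul_nonneg hβ.1 hn0'.le
    have h4 : |(|ip (σ i) (σ j)| - β * n)| ≤ η * n := by
      have := abs_abs_sub_abs_le_abs_sub (ip (σ i) (σ j)) (β * n)
      rw [abs_of_nonneg hβn] at this
      exact this.trans hclose
    rw [abs_le] at h4
    rw [le_div_iff₀ hn0', div_le_iff₀ hn0']
    constructor <;> nlinarith [h4.1, h4.2]
  have hbad : stdGaussian n Sᶜ ≤ ENNReal.ofReal ε := by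
    calc stdGaussian n Sᶜ
        ≤ stdGaussian n (⋃ z ∈ (Finset.range (Q + 1) ×ˢ (Finset.univ : Finset (Fin m))), bad z) :=
          measure_mono hcover
      _ ≤ ∑ z ∈ (Finset.range (Q + 1) ×ˢ (Finset.univ : Finset (Fin m))), stdGaussian n (bad z) :=
          measure_biUnion_finset_le _ _
      _ ≤ ∑ z ∈ (Finset.range (Q + 1) ×ˢ (Finset.univ : Finset (Fin m))), ENNReal.ofReal δ :=
          Finset.sum_le_sum fun z _ => hfail _ (isCube_template _ _ _)
      _ = ENNReal.ofReal ε := by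
          rw [Finset.sum_const, ← ENNReal.ofReal_nsmul]
          congr 1
          simp [hδ]
          field_simp
  have htot : 1 ≤ stdGaussian n S + ENNReal.ofReal ε := by
    calc (1 : ENNReal) = stdGaussian n (S ∪ Sᶜ) := by rw [Set.union_compl_self, measure_univ]
      _ ≤ stdGaussian n S + stdGaussian n Sᶜ := measure_union_le _ _
      _ ≤ _ := by gcongr
  exact lt_of_add_lt_add_right (hε.trans_le htot)
end
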